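/- Every cactoid is simply connected and locally simply connected. -/

import Mathlib

open Metric Set

/-- A Jordan curve: a subset homeomorphic to the circle. -/
def IsJordanCurve {X : Type} [TopologicalSpace X] (J : Set X) : Prop :=
  Nonempty (AddCircle (1 : ℝ) ≃ₜ J)

/-- A set is cyclicly connected if every pair of its points lies on a Jordan curve in it. -/
def CyclicallyConnected {X : Type} [TopologicalSpace X] (C : Set X) : Prop :=
  ∀ x ∈ C, ∀ y ∈ C, ∃ J : Set X, J ⊆ C ∧ IsJordanCurve J ∧ x ∈ J ∧ y ∈ J

/-- A maximal cyclic subset: non-degenerate, cyclicly connected, and not a proper subset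
of any cyclicly connected subset. -/
def MaximalCyclic {X : Type} [TopologicalSpace X] (T : Set X) : Prop :=
  ¬ T.Subsingleton ∧ CyclicallyConnected T ∧
    ∀ C : Set X, CyclicallyConnected C → T ⊆ C → C = T
/-- Locally simply connected: every point has arbitrarily small simply connected
open neighborhoods. -/
def LocSimplyConnected (X : Type) [TopologicalSpace X] : Prop :=
  ∀ x : X, ∀ U ∈ nhds x, ∃ V ∈ nhds x, V ⊆ U ∧ IsOpen V ∧ SimplyConnectedSpace ↥V

/-- Homeomorphic to the 2-sphere. -/
def IsTopological2Sphere (T : Type) [TopologicalSpace T] : Prop :=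
  Nonempty (T ≃ₜ Metric.sphere (0 : EuclideanSpace ℝ (Fin 3)) 1)

section PeanoPaths
open Filter Topology

variable {X : Type} [MetricSpace X]

/-- Two points of a preconnected set are joined, inside the set, by chains with arbitrarily
small steps. -/
lemma IsPreconnected.exists_chain {S : Set X} (hS : IsPreconnected S) {η : ℝ} (hη : 0 < η)
    {x y : X} (hx : x ∈ S) (hy : y ∈ S) :
    ∃ (N : ℕ) (q : ℕ → X), q 0 = x ∧ (∀ j, N ≤ j → q j = y) ∧
      (∀ j, dist (q j) (q (j + 1)) < η) ∧ ∀ j, q j ∈ S := by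
  have key := hS.induction₂' (fun x y => x ∈ S → y ∈ S →
    ∃ (N : ℕ) (q : ℕ → X), q 0 = x ∧ (∀ j, N ≤ j → q j = y) ∧
      (∀ j, dist (q j) (q (j + 1)) < η) ∧ ∀ j, q j ∈ S) ?_ ?_ hx hy
  · exact key hx hy
  · intro a ha
    have step : ∀ u v : X, dist u v < η → u ∈ S → v ∈ S →
        ∃ (N : ℕ) (q : ℕ → X), q 0 = u ∧ (∀ j, N ≤ j → q j = v) ∧
          (∀ j, dist (q j) (q (j + 1)) < η) ∧ ∀ j, q j ∈ S := by
      intro u v huv hu hv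
      refine ⟨1, fun j => if j = 0 then u else v, by simp, ?_, ?_, ?_⟩
      · intro j hj
        simp [Nat.one_le_iff_ne_zero.1 hj]
      · intro j
        by_cases hj : j = 0 <;> simp [hj, huv, hη]
      · intro j
        by_cases hj : j = 0 <;> simp [hj, hu, hv]
    filter_upwards [mem_nhdsWithin_of_mem_nhds (ball_mem_nhds a hη)] with b hb
    exact ⟨step a b (by rwa [dist_comm]), step b a hb⟩
  · intro a b c _ hb _ hab hbc ha hc
    obtain ⟨N, q, q0, qN, qd, qS⟩ := hab ha hb
    obtain ⟨N', q', q0', qN', qd', qS'⟩ := hbc hb hc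
    refine ⟨N + N', fun j => if j < N then q j else q' (j - N), ?_, ?_, ?_, ?_⟩
    · by_cases h : 0 < N
      · simp [h, q0]
      · obtain rfl : N = 0 := by omega
        have := qN 0 le_rfl
        simp [q0', ← this, q0]
    · intro j hj
      simp only [show ¬ j < N by omega, if_false]
      exact qN' _ (by omega)
    · intro j
      rcases lt_trichotomy (j + 1) N with h | h | h
      · simp [h, show j < N by omega, qd]
      · have := qd j
        rw [qN (j + 1) (by omega), ← q0'] at this
        simpa [show j < N by omega, ← h] using this
      · have := qd' (j - N)
        simpa [show ¬ j < N by omega, show ¬ j + 1 < N by omega,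
          show j + 1 - N = j - N + 1 by omega] using this
    · intro j
      by_cases h : j < N <;> simp [h, qS, qS']

/-- A compact locally connected metric space is uniformly locally connected. -/
lemma exists_isPreconnected_of_dist_lt [CompactSpace X] [LocallyConnectedSpace X] {ε : ℝ}
    (hε : 0 < ε) :
    ∃ δ > 0, ∀ x y : X, dist x y < δ → ∃ S, IsPreconnected S ∧ x ∈ S ∧ y ∈ S ∧ S ⊆ ball x ε := by
  obtain ⟨δ, hδ, h⟩ := lebesgue_number_lemma_of_metric (s := (univ : Set X))
    (c := fun z : X => connectedComponentIn (ball z (ε / 2)) z) isCompact_univ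
    (fun z => isOpen_ball.connectedComponentIn)
    (fun z _ => mem_iUnion.2 ⟨z, mem_connectedComponentIn (mem_ball_self (by linarith))⟩)
  refine ⟨δ, hδ, fun x y hxy => ?_⟩
  obtain ⟨z, hz⟩ := h x (mem_univ x)
  refine ⟨_, isPreconnected_connectedComponentIn, hz (mem_ball_self hδ),
    hz (by rwa [mem_ball, dist_comm]), fun w hw => ?_⟩
  have h1 := connectedComponentIn_subset _ _ hw
  have h2 := connectedComponentIn_subset _ _ (hz (mem_ball_self hδ))
  rw [mem_ball] at *
  have := dist_triangle_right w x z
  linarith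

/-- A chain with steps below `δ` is refined to one with steps below `η` and staying `ε`-close. -/
lemma exists_chain_refinement {ε δ η : ℝ} (hε : 0 < ε) (hη : 0 < η)
    (hδ : ∀ x y : X, dist x y < δ → ∃ S, IsPreconnected S ∧ x ∈ S ∧ y ∈ S ∧ S ⊆ ball x ε)
    {M : ℕ} {p : ℕ → X} {y : X} (hpM : ∀ k, M ≤ k → p k = y)
    (hp : ∀ k, dist (p k) (p (k + 1)) < δ) :
    ∃ N > 0, ∃ p' : ℕ → X, p' 0 = p 0 ∧ (∀ k, M * N ≤ k → p' k = y) ∧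
      (∀ k, dist (p' k) (p' (k + 1)) < η) ∧ ∀ k, dist (p' k) (p (k / N)) < ε := by
  have h1 : ∀ k, ∃ (N : ℕ) (q : ℕ → X), q 0 = p k ∧ (∀ j, N ≤ j → q j = p (k + 1)) ∧
      (∀ j, dist (q j) (q (j + 1)) < η) ∧ (∀ j, dist (q j) (p k) < ε) ∧ (M ≤ k → N = 0) := by
    intro k
    by_cases hk : M ≤ k
    · exact ⟨0, fun _ => p k, rfl, fun j _ => by rw [hpM k hk, hpM _ (by omega)],
        fun j => by simpa using hη, fun j => by simpa using hε, fun _ => rfl⟩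
    · obtain ⟨S, hS, hx, hy, hSb⟩ := hδ _ _ (hp k)
      obtain ⟨N, q, h0, hN, hd, hm⟩ := hS.exists_chain hη hx hy
      exact ⟨N, q, h0, hN, hd, fun j => hSb (hm j), fun h => absurd h hk⟩
  choose N q q0 qN qd qε qM using h1
  set B := (Finset.range M).sup N + 1 with hB
  have hNB : ∀ k, N k ≤ B := by
    intro k
    by_cases hk : M ≤ k
    · rw [qM k hk]; omega
    · have := Finset.le_sup (f := N) (Finset.mem_range.2 (not_le.1 hk))
      omega
  have hB0 : 0 < B := by omega
  refine ⟨B, hB0, fun i => q (i / B) (i % B), by simp [q0], ?_, ?_, fun k => qε _ _⟩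
  · intro k hk
    have hk' : M ≤ k / B := (Nat.le_div_iff_mul_le hB0).2 hk
    have := qN (k / B) (k % B) (by rw [qM _ hk']; omega)
    simp only [this]
    exact hpM _ (by omega)
  · intro k
    by_cases h : k % B + 1 < B
    · have hd : (k + 1) / B = k / B := by
        rw [show k + 1 = k % B + 1 + B * (k / B) by have := Nat.mod_add_div k B; omega,
          Nat.add_mul_div_left _ _ hB0, Nat.div_eq_of_lt h, zero_add]
      have hm : (k + 1) % B = k % B + 1 := by
        rw [Nat.add_mod, Nat.mod_eq_of_lt (show 1 < B by omega), Nat.mod_eq_of_lt h]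
      simp only [hd, hm]
      exact qd _ _
    · have hlt := Nat.mod_lt k hB0
      have he : k % B + 1 = B := by omega
      have hk : k + 1 = B * (k / B + 1) := by
        have := Nat.div_add_mod k B
        rw [mul_add]; omega
      have hd : (k + 1) / B = k / B + 1 := by rw [hk, Nat.mul_div_cancel_left _ hB0]
      have hm : (k + 1) % B = 0 := by rw [hk]; simp
      simp only [hd, hm, q0]
      rw [← qN (k / B) (k % B + 1) (by rw [he]; exact hNB _)]
      exact qd _ _

/-- Successively refined chains from `x` to `y` converge to a path. -/
lemma exists_path_of_chains [CompleteSpace X] {x y : X} {ε : ℝ} {M : ℕ → ℕ}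
    {p : ℕ → ℕ → X} {δ : ℕ → ℝ} (hδ : Tendsto δ atTop (𝓝 0)) (hM : ∀ n, 0 < M n) (h0 : ∀ n, p n 0 = x)
    (h1 : ∀ n k, M n ≤ k → p n k = y) (hd : ∀ n k, dist (p n k) (p n (k + 1)) < δ n)
    (hs : ∀ n, ∃ N > 0, M (n + 1) = M n * N ∧
      ∀ k, dist (p (n + 1) k) (p n (k / N)) < ε / 2 / 2 ^ n) :
    ∃ γ : Path x y, ∀ t, ∃ k, dist (p 0 k) (γ t) ≤ ε := by
  set f : ℕ → ℝ → X := fun n t => p n ⌊M n * t⌋₊ with hf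
  have hfd : ∀ t n, dist (f n t) (f (n + 1) t) ≤ ε / 2 / 2 ^ n := by
    intro t n
    obtain ⟨N, hN, hMN, hk⟩ := hs n
    have : ⌊(M n : ℝ) * t⌋₊ = ⌊(M (n + 1) : ℝ) * t⌋₊ / N := by
      rw [← Nat.floor_div_natCast, hMN]
      congr 1
      have : (N : ℝ) ≠ 0 := by positivity
      push_cast; field_simp
    simp only [hf, this]
    rw [dist_comm]
    exact (hk _).le
  have hlim : ∀ t, ∃ z, Tendsto (fun n => f n t) atTop (𝓝 z) := fun t =>
    cauchySeq_tendsto_of_complete (cauchySeq_of_le_geometric_two (hfd t))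
  choose g hg using hlim
  have hfg : ∀ t n, dist (f n t) (g t) ≤ ε / 2 ^ n := fun t n =>
    dist_le_of_le_geometric_two_of_tendsto (hfd t) (hg t) n
  have hε0 : Tendsto (fun n : ℕ => 2 * (ε / 2 ^ n) + δ n) atTop (𝓝 0) := by
    have : Tendsto (fun n : ℕ => ε / 2 ^ n) atTop (𝓝 0) := by
      have := (tendsto_pow_atTop_nhds_zero_of_lt_one (r := (1 / 2 : ℝ)) (by norm_num)
        (by norm_num)).const_mul ε
      simpa [div_eq_mul_inv] using this
    simpa using (this.const_mul 2).add hδ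
  have hfloor : ∀ (n : ℕ) (t t' : ℝ), 0 ≤ t → t ≤ t' → t' - t < 1 / M n →
      dist (f n t) (f n t') < δ n := by
    intro n t t' ht htt' hlt
    have hMn : (0 : ℝ) < M n := by exact_mod_cast hM n
    have h1 : ⌊(M n : ℝ) * t⌋₊ ≤ ⌊(M n : ℝ) * t'⌋₊ := Nat.floor_le_floor (by gcongr)
    have h2 : ⌊(M n : ℝ) * t'⌋₊ ≤ ⌊(M n : ℝ) * t⌋₊ + 1 := by
      rw [← Nat.floor_add_one (by positivity)]
      apply Nat.floor_le_floor
      rw [lt_div_iff₀ hMn] at hlt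
      nlinarith
    have h3 : ⌊(M n : ℝ) * t'⌋₊ = ⌊(M n : ℝ) * t⌋₊ ∨ ⌊(M n : ℝ) * t'⌋₊ = ⌊(M n : ℝ) * t⌋₊ + 1 := by
      omega
    simp only [hf]
    rcases h3 with h3 | h3 <;> rw [h3]
    · rw [dist_self]; exact dist_nonneg.trans_lt (hd n 0)
    · exact hd _ _
  have hcont : Continuous (fun t : unitInterval => g t) := by
    rw [Metric.continuous_iff]
    intro b e he
    obtain ⟨n, hn⟩ := (hε0.eventually (gt_mem_nhds he)).exists
    have hMn : (0 : ℝ) < M n := by exact_mod_cast hM n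
    refine ⟨1 / M n, by positivity, fun a hab => ?_⟩
    have h3 : dist (f n a) (f n b) < δ n := by
      rw [Subtype.dist_eq, Real.dist_eq] at hab
      rcases le_total (a : ℝ) b with h | h
      · exact hfloor n a b a.2.1 h (by rw [abs_sub_comm] at hab; exact (le_abs_self _).trans_lt hab)
      · rw [dist_comm]
        exact hfloor n b a b.2.1 h ((le_abs_self _).trans_lt hab)
    have h4 := dist_triangle4 (g a) (f n a) (f n b) (g b)
    have h5 := hfg a n
    have h6 := hfg b n
    rw [dist_comm] at h5
    linarith
  refine ⟨⟨⟨fun t => g t, hcont⟩, ?_, ?_⟩, fun t => ⟨⌊M 0 * (t : ℝ)⌋₊, ?_⟩⟩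
  · have : ∀ n, f n 0 = x := fun n => by simp [hf, h0]
    exact tendsto_nhds_unique (hg _) (by simp [this])
  · have : ∀ n, f n 1 = y := fun n => by simp [hf, h1]
    exact tendsto_nhds_unique (hg _) (by simp [this])
  · simpa using hfg t 0

/-- Nearby points of a compact locally connected metric space are joined by small paths. -/
lemma exists_small_path [CompactSpace X] [LocallyConnectedSpace X] {ε : ℝ} (hε : 0 < ε) :
    ∃ δ > 0, ∀ x y : X, dist x y < δ → ∃ γ : Path x y, ∀ t, dist (γ t) x < ε := by
  have hstep : ∀ n : ℕ, ∃ δ > 0, δ ≤ ε / 4 / 2 ^ n ∧ ∀ x y : X, dist x y < δ →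
      ∃ S, IsPreconnected S ∧ x ∈ S ∧ y ∈ S ∧ S ⊆ ball x (ε / 2 / 2 / 2 ^ n) := by
    intro n
    obtain ⟨δ, hδ, h⟩ := exists_isPreconnected_of_dist_lt (X := X)
      (show 0 < ε / 2 / 2 / 2 ^ n by positivity)
    exact ⟨min δ (ε / 4 / 2 ^ n), by positivity, min_le_right _ _,
      fun x y hxy => h x y (hxy.trans_le (min_le_left _ _))⟩
  choose δ hδ0 hδε hδ using hstep
  refine ⟨δ 0, hδ0 0, fun x y hxy => ?_⟩
  let St : ℕ → ℕ × (ℕ → X) → Prop := fun n s => 0 < s.1 ∧ s.2 0 = x ∧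
    (∀ k, s.1 ≤ k → s.2 k = y) ∧ ∀ k, dist (s.2 k) (s.2 (k + 1)) < δ n
  have hnext : ∀ (n : ℕ) (s : {s // St n s}), ∃ s' : {s // St (n + 1) s},
      ∃ N > 0, s'.1.1 = s.1.1 * N ∧
        ∀ k, dist (s'.1.2 k) (s.1.2 (k / N)) < ε / 2 / 2 / 2 ^ n := by
    rintro n ⟨⟨M, p⟩, hM, h0, h1, hd⟩
    obtain ⟨N, hN, p', h0', h1', hd', hc⟩ :=
      exists_chain_refinement (by positivity) (hδ0 (n + 1)) (hδ n) h1 hd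
    exact ⟨⟨⟨M * N, p'⟩, Nat.mul_pos hM hN, h0'.trans h0, h1', hd'⟩, N, hN, rfl, hc⟩
  choose next hnext using hnext
  have s0 : St 0 (1, fun k => if k = 0 then x else y) := by
    refine ⟨one_pos, by simp, fun k hk => ?_, fun k => ?_⟩
    · simp [Nat.one_le_iff_ne_zero.1 hk]
    · by_cases hk : k = 0 <;> simp [hk, hxy, hδ0]
  let seq : (n : ℕ) → {s // St n s} := fun n => Nat.rec ⟨_, s0⟩ next n
  have hδt : Tendsto δ atTop (𝓝 0) := by
    have : Tendsto (fun n : ℕ => ε / 4 / 2 ^ n) atTop (𝓝 0) := by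
      have := (tendsto_pow_atTop_nhds_zero_of_lt_one (r := (1 / 2 : ℝ)) (by norm_num)
        (by norm_num)).const_mul (ε / 4)
      simpa [div_eq_mul_inv] using this
    exact squeeze_zero (fun n => (hδ0 n).le) hδε this
  obtain ⟨γ, hγ⟩ := exists_path_of_chains (x := x) (y := y) (ε := ε / 2)
    (M := fun n => (seq n).1.1) (p := fun n => (seq n).1.2) hδt (fun n => (seq n).2.1)
    (fun n => (seq n).2.2.1) (fun n => (seq n).2.2.2.1) (fun n => (seq n).2.2.2.2)
    (fun n => hnext n (seq n))
  refine ⟨γ, fun t => ?_⟩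
  obtain ⟨k, hk⟩ := hγ t
  have hp : dist (if k = 0 then x else y) x < ε / 3 := by
    have := hδε 0
    by_cases h : k = 0
    · simp [h, hε]
    · simp only [h, if_false]
      rw [dist_comm]
      norm_num at this
      linarith
  have h2 : dist (if k = 0 then x else y) (γ t) ≤ ε / 2 := hk
  have := dist_triangle_left (γ t) x (if k = 0 then x else y)
  linarith

/-- A compact locally connected metric space is locally path connected. -/
theorem locallyPathConnectedSpace_of_compact (X : Type) [MetricSpace X] [CompactSpace X]
    [LocallyConnectedSpace X] : LocallyPathConnectedSpace X := by
  rw [locallyPathConnectedSpace_iff_pathComponentIn_mem_nhds]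
  intro x u hu hx
  obtain ⟨ε, hε, hεu⟩ := Metric.isOpen_iff.1 hu x hx
  obtain ⟨δ, hδ, h⟩ := exists_small_path (X := X) hε
  refine Filter.mem_of_superset (ball_mem_nhds x hδ) fun y hy => ?_
  obtain ⟨γ, hγ⟩ := h x y (by rwa [dist_comm])
  exact ⟨γ, fun t => hεu (hγ t)⟩

end PeanoPaths

section Lamination
open Filter Topology

variable {X : Type}

/-- A lamination of a map `f` on `[0, 1]`: a set of pairwise non-crossing chords `(c, d)` with
`f c = f d`. -/
structure IsLamination (f : ℝ → X) (L : Set (ℝ × ℝ)) : Prop where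
  nonneg : ∀ p ∈ L, 0 ≤ p.1
  le : ∀ p ∈ L, p.1 ≤ p.2
  le_one : ∀ p ∈ L, p.2 ≤ 1
  eq : ∀ p ∈ L, f p.1 = f p.2
  not_cross : ∀ p ∈ L, ∀ q ∈ L, ¬(p.1 < q.1 ∧ q.1 < p.2 ∧ p.2 < q.2)

lemma exists_maximal_isLamination (f : ℝ → X) : ∃ L, Maximal (IsLamination f) L := by
  refine zorn_subset {L | IsLamination f L} fun c hc hch => ?_
  refine ⟨⋃₀ c, ⟨?_, ?_, ?_, ?_, ?_⟩, fun s hs => subset_sUnion_of_mem hs⟩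
  · rintro p ⟨s, hs, hp⟩; exact (hc hs).nonneg p hp
  · rintro p ⟨s, hs, hp⟩; exact (hc hs).le p hp
  · rintro p ⟨s, hs, hp⟩; exact (hc hs).le_one p hp
  · rintro p ⟨s, hs, hp⟩; exact (hc hs).eq p hp
  · rintro p ⟨s, hs, hp⟩ q ⟨s', hs', hq⟩
    rcases hch.total hs hs' with h | h
    · exact (hc hs').not_cross p (h hp) q hq
    · exact (hc hs).not_cross p hp q (h hq)

variable {f : ℝ → X} {L : Set (ℝ × ℝ)}

namespace IsLamination

lemma mem_of_not_cross (hL : Maximal (IsLamination f) L) {u v : ℝ} (hu : 0 ≤ u) (huv : u ≤ v)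
    (hv : v ≤ 1) (he : f u = f v) (h1 : ∀ q ∈ L, ¬(u < q.1 ∧ q.1 < v ∧ v < q.2))
    (h2 : ∀ q ∈ L, ¬(q.1 < u ∧ u < q.2 ∧ q.2 < v)) : (u, v) ∈ L := by
  have hl := hL.prop
  have : IsLamination f (insert (u, v) L) := by
    refine ⟨?_, ?_, ?_, ?_, ?_⟩
    · rintro p (rfl | hp); exacts [hu, hl.nonneg p hp]
    · rintro p (rfl | hp); exacts [huv, hl.le p hp]
    · rintro p (rfl | hp); exacts [hv, hl.le_one p hp]
    · rintro p (rfl | hp); exacts [he, hl.eq p hp]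
    · rintro p (rfl | hp) q (rfl | hq)
      · rintro ⟨h, _, _⟩; exact lt_irrefl _ h
      · exact h1 q hq
      · exact h2 p hp
      · exact hl.not_cross p hp q hq
  exact hL.le_of_ge this (subset_insert _ _) (mem_insert _ _)

lemma diag_mem (hL : Maximal (IsLamination f) L) {t : ℝ} (h0 : 0 ≤ t) (h1 : t ≤ 1) :
    (t, t) ∈ L :=
  mem_of_not_cross hL h0 le_rfl h1 rfl (fun _ _ h => by linarith [h.1, h.2.1])
    (fun _ _ h => by linarith [h.2.1, h.2.2])

end IsLamination

/-- `p` is a longest chord over `t` among the chords of length at most `s` inside `[a, b]`. -/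
structure IsTopChord (L : Set (ℝ × ℝ)) (a b s t : ℝ) (p : ℝ × ℝ) : Prop where
  mem : p ∈ L
  left : a ≤ p.1
  right : p.2 ≤ b
  fst_le : p.1 ≤ t
  le_snd : t ≤ p.2
  length_le : p.2 - p.1 ≤ s
  longest : ∀ q ∈ L, a ≤ q.1 → q.2 ≤ b → q.1 ≤ t → t ≤ q.2 → q.2 - q.1 ≤ s →
    q.2 - q.1 ≤ p.2 - p.1

lemma IsTopChord.subset_or_eq (hl : IsLamination f L) {a b s t : ℝ} {p q : ℝ × ℝ}
    (hp : IsTopChord L a b s t p) (hq : q ∈ L) (ha : a ≤ q.1) (hb : q.2 ≤ b) (h1 : q.1 ≤ t)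
    (h2 : t ≤ q.2) (h3 : q.2 - q.1 ≤ s) : (p.1 ≤ q.1 ∧ q.2 ≤ p.2) ∨ f q.1 = f p.1 := by
  have hlen := hp.longest q hq ha hb h1 h2 h3
  have hp1 := hp.fst_le
  have hp2 := hp.le_snd
  have hpe := hl.eq p hp.mem
  have hqe := hl.eq q hq
  rcases lt_or_ge q.1 p.1 with h | h
  · right
    have hlt : q.2 < p.2 := by linarith
    have hnc : ¬ p.1 < q.2 := fun h' => hl.not_cross q hq p hp.mem ⟨h, h', hlt⟩
    have : q.2 = p.1 := by linarith
    rw [hqe, this]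
  · rcases le_or_gt q.2 p.2 with h' | h'
    · exact Or.inl ⟨h, h'⟩
    · right
      have hlt : p.1 < q.1 := by linarith
      have hnc : ¬ q.1 < p.2 := fun h'' => hl.not_cross p hp.mem q hq ⟨hlt, h'', h'⟩
      have : q.1 = p.2 := by linarith
      rw [hpe, this]

/-- The supremum of the lengths of the chords properly nested in `p`. -/
noncomputable def gapDepth (L : Set (ℝ × ℝ)) (p : ℝ × ℝ) : ℝ :=
  sSup {r | ∃ q ∈ L, p.1 ≤ q.1 ∧ q.2 ≤ p.2 ∧ q ≠ p ∧ q.2 - q.1 = r}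

lemma le_gapDepth {p q : ℝ × ℝ} (hq : q ∈ L) (h1 : p.1 ≤ q.1)
    (h2 : q.2 ≤ p.2) (h3 : q ≠ p) : q.2 - q.1 ≤ gapDepth L p := by
  refine le_csSup ⟨p.2 - p.1, ?_⟩ ⟨q, hq, h1, h2, h3, rfl⟩
  rintro r ⟨q, _, h1, h2, _, rfl⟩
  linarith

lemma gapDepth_nonneg (hL : Maximal (IsLamination f) L) {p : ℝ × ℝ} (hp : p ∈ L)
    (hlt : p.1 < p.2) : 0 ≤ gapDepth L p := by
  have := le_gapDepth (L := L) (p := p) (IsLamination.diag_mem hL (hL.prop.nonneg p hp)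
    (hlt.le.trans (hL.prop.le_one p hp))) le_rfl hlt.le (by
      intro h
      have : p.2 = p.1 := by rw [← h]
      linarith)
  simpa using this

variable [MetricSpace X]

namespace IsLamination

lemma isClosed (hf : Continuous f) (hL : Maximal (IsLamination f) L) : IsClosed L := by
  have hl := hL.prop
  have : IsLamination f (closure L) := by
    refine ⟨?_, ?_, ?_, ?_, ?_⟩
    · exact fun p hp => closure_minimal (fun q hq => hl.nonneg q hq)
        (isClosed_le continuous_const continuous_fst) hp
    · exact fun p hp => closure_minimal (fun q hq => hl.le q hq)
        (isClosed_le continuous_fst continuous_snd) hp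
    · exact fun p hp => closure_minimal (fun q hq => hl.le_one q hq)
        (isClosed_le continuous_snd continuous_const) hp
    · exact fun p hp => closure_minimal (fun q hq => hl.eq q hq)
        (isClosed_eq (hf.comp continuous_fst) (hf.comp continuous_snd)) hp
    · intro p hp q hq hcr
      have hO : IsOpen {x : (ℝ × ℝ) × (ℝ × ℝ) | x.1.1 < x.2.1 ∧ x.2.1 < x.1.2 ∧ x.1.2 < x.2.2} :=
        .and (isOpen_lt (by fun_prop) (by fun_prop))
          (.and (isOpen_lt (by fun_prop) (by fun_prop)) (isOpen_lt (by fun_prop) (by fun_prop)))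
      have hm : (p, q) ∈ closure (L ×ˢ L) := by
        rw [closure_prod_eq]; exact ⟨hp, hq⟩
      obtain ⟨⟨p', q'⟩, hc, hp', hq'⟩ := mem_closure_iff.1 hm _ hO hcr
      exact hl.not_cross p' hp' q' hq' hc
  exact closure_subset_iff_isClosed.1 (hL.le_of_ge this subset_closure)

lemma isCompact (hf : Continuous f) (hL : Maximal (IsLamination f) L) : IsCompact L := by
  refine (isCompact_Icc (a := ((0 : ℝ), (0 : ℝ))) (b := ((1 : ℝ), (1 : ℝ)))).of_isClosed_subset
    (isClosed hf hL) fun p hp => ?_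
  have h1 := hL.prop.nonneg p hp
  have h2 := hL.prop.le p hp
  have h3 := hL.prop.le_one p hp
  exact ⟨⟨h1, h1.trans h2⟩, ⟨h2.trans h3, h3⟩⟩

end IsLamination

lemma exists_isTopChord (hf : Continuous f) (hL : Maximal (IsLamination f) L) {a b s t : ℝ}
    (ha : 0 ≤ a) (hb : b ≤ 1) (hs : 0 ≤ s) (hat : a ≤ t) (htb : t ≤ b) :
    ∃ p, IsTopChord L a b s t p := by
  have hK : IsCompact (L ∩ {q | a ≤ q.1 ∧ q.2 ≤ b ∧ q.1 ≤ t ∧ t ≤ q.2 ∧ q.2 - q.1 ≤ s}) := by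
    refine (IsLamination.isCompact hf hL).inter_right ?_
    exact .and (isClosed_le (by fun_prop) (by fun_prop))
      (.and (isClosed_le (by fun_prop) (by fun_prop))
      (.and (isClosed_le (by fun_prop) (by fun_prop))
      (.and (isClosed_le (by fun_prop) (by fun_prop)) (isClosed_le (by fun_prop) (by fun_prop)))))
  obtain ⟨p, ⟨hp, h1, h2, h3, h4, h5⟩, hmax⟩ := hK.exists_isMaxOn
    ⟨(t, t), IsLamination.diag_mem hL (ha.trans hat) (htb.trans hb), hat, htb, le_rfl, le_rfl,
      by simpa using hs⟩
    (f := fun q : ℝ × ℝ => q.2 - q.1) (by fun_prop)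
  exact ⟨p, hp, h1, h2, h3, h4, h5, fun q hq g1 g2 g3 g4 g5 => hmax ⟨hq, g1, g2, g3, g4, g5⟩⟩

open Classical in
/-- The map `f` with all chords of `L` of length at most `s` collapsed. -/
noncomputable def collapse (f : ℝ → X) (L : Set (ℝ × ℝ)) (s t : ℝ) : X :=
  if h : ∃ p, IsTopChord L 0 1 s t p then f h.choose.1 else f t

lemma exists_isTopChord_collapse (hf : Continuous f) (hL : Maximal (IsLamination f) L) {s t : ℝ}
    (hs : 0 ≤ s) (h0 : 0 ≤ t) (h1 : t ≤ 1) :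
    ∃ p, IsTopChord L 0 1 s t p ∧ collapse f L s t = f p.1 := by
  have h := exists_isTopChord hf hL le_rfl le_rfl hs h0 h1
  exact ⟨h.choose, h.choose_spec, by rw [collapse, dif_pos h]⟩

lemma collapse_eq_of_mem (hf : Continuous f) (hL : Maximal (IsLamination f) L) {s t t' : ℝ}
    {e : ℝ × ℝ} (he : e ∈ L) (hes : e.2 - e.1 ≤ s) (ht : t ∈ Icc e.1 e.2)
    (ht' : t' ∈ Icc e.1 e.2) : collapse f L s t = collapse f L s t' := by
  have hl := hL.prop
  have e0 := hl.nonneg e he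
  have e1 := hl.le_one e he
  have e2 := hl.le e he
  obtain ⟨p, hp, hpc⟩ := exists_isTopChord_collapse hf hL (s := s) (by linarith)
    (e0.trans ht.1) (ht.2.trans e1)
  obtain ⟨p', hp', hpc'⟩ := exists_isTopChord_collapse hf hL (s := s) (by linarith)
    (e0.trans ht'.1) (ht'.2.trans e1)
  rw [hpc, hpc']
  have key : ∀ (u v : ℝ) (p q : ℝ × ℝ), IsTopChord L 0 1 s u p → IsTopChord L 0 1 s v q →
      v ∈ Icc p.1 p.2 → u ∈ Icc q.1 q.2 → f p.1 = f q.1 := by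
    intro u v p q hp hq hv hu
    rcases hq.subset_or_eq hl hp.mem hp.left hp.right hv.1 hv.2 hp.length_le with h | h
    · rcases hp.subset_or_eq hl hq.mem hq.left hq.right hu.1 hu.2 hq.length_le with h' | h'
      · rw [le_antisymm h'.1 h.1]
      · exact h'.symm
    · exact h
  rcases hp.subset_or_eq hl he e0 e1 ht.1 ht.2 hes with h | h
  · have hv : t' ∈ Icc p.1 p.2 := ⟨h.1.trans ht'.1, ht'.2.trans h.2⟩
    rcases hp'.subset_or_eq hl hp.mem hp.left hp.right hv.1 hv.2 hp.length_le with h' | h'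
    · exact key _ _ _ _ hp hp' hv ⟨h'.1.trans hp.fst_le, hp.le_snd.trans h'.2⟩
    · exact h'
  · rcases hp'.subset_or_eq hl he e0 e1 ht'.1 ht'.2 hes with h' | h'
    · have hu : t ∈ Icc p'.1 p'.2 := ⟨h'.1.trans ht.1, ht.2.trans h'.2⟩
      rcases hp.subset_or_eq hl hp'.mem hp'.left hp'.right hu.1 hu.2 hp'.length_le with h'' | h''
      · exact key _ _ _ _ hp hp' ⟨h''.1.trans hp'.fst_le, hp'.le_snd.trans h''.2⟩ hu
      · exact h''.symm
    · rw [← h, h']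

lemma collapse_mem_image (hf : Continuous f) (hL : Maximal (IsLamination f) L) {s t : ℝ}
    (hs : 0 ≤ s) (h0 : 0 ≤ t) (h1 : t ≤ 1) : collapse f L s t ∈ f '' Icc 0 1 := by
  obtain ⟨p, hp, hpc⟩ := exists_isTopChord_collapse hf hL hs h0 h1
  exact ⟨p.1, ⟨hp.left, hp.fst_le.trans h1⟩, hpc.symm⟩

/-- If the chords of length at most `m` do not leave `[a, b]`, then at the level `m` the collapsed
map can be computed with the longest chord inside `[a, b]`. -/
lemma collapse_eq_of_isTopChord (hf : Continuous f) (hL : Maximal (IsLamination f) L) {a b m u : ℝ}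
    (ha : 0 ≤ a) (hb : b ≤ 1)
    (hm : ∀ q ∈ L, q.2 - q.1 ≤ m → q.2 ≤ a ∨ b ≤ q.1 ∨ (a ≤ q.1 ∧ q.2 ≤ b))
    {q : ℝ × ℝ} (hq : IsTopChord L a b m u q) : collapse f L m u = f q.1 := by
  have hl := hL.prop
  have hm0 : 0 ≤ m := (sub_nonneg.2 (hl.le q hq.mem)).trans hq.length_le
  have hqe := hl.eq q hq.mem
  have q1 := hq.fst_le
  have q2 := hq.le_snd
  have q3 := hq.left
  have q4 := hq.right
  obtain ⟨p, hp, hpc⟩ := exists_isTopChord_collapse hf hL (t := u) hm0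
    (ha.trans (hq.left.trans hq.fst_le)) ((hq.le_snd.trans hq.right).trans hb)
  have p1 := hp.fst_le
  have p2 := hp.le_snd
  have hpe := hl.eq p hp.mem
  rw [hpc]
  rcases hm p hp.mem hp.length_le with h | h | h
  · have e1 : q.1 = u := by linarith
    have e2 : p.2 = u := by linarith
    rw [hpe, e1, e2]
  · have e1 : q.2 = u := by linarith
    have e2 : p.1 = u := by linarith
    rw [hqe, e1, e2]
  · rcases hp.subset_or_eq hl hq.mem (ha.trans q3) (q4.trans hb) q1 q2 hq.length_le with h' | h'
    · rcases hq.subset_or_eq hl hp.mem h.1 h.2 p1 p2 hp.length_le with h'' | h''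
      · rw [le_antisymm h'.1 h''.1]
      · exact h''
    · exact h'.symm

/-- The collapsed map on a gap of the lamination is injective up to intervals of constancy and
the two endpoints. -/
lemma collapse_eq_imp (hf : Continuous f) (hL : Maximal (IsLamination f) L) {a b m : ℝ}
    (ha : 0 ≤ a) (hb : b ≤ 1) (hm0 : 0 ≤ m)
    (h1 : ∀ q ∈ L, ¬(q.1 < a ∧ a < q.2 ∧ q.2 < b)) (h2 : ∀ q ∈ L, ¬(a < q.1 ∧ q.1 < b ∧ b < q.2))
    (h3 : ∀ q ∈ L, a ≤ q.1 → q.2 ≤ b → q ≠ (a, b) → q.2 - q.1 ≤ m)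
    (h4 : ∀ q ∈ L, q.2 - q.1 ≤ m → q.2 ≤ a ∨ b ≤ q.1 ∨ (a ≤ q.1 ∧ q.2 ≤ b))
    {u v : ℝ} (hau : a ≤ u) (huv : u ≤ v) (hvb : v ≤ b)
    (he : collapse f L m u = collapse f L m v) :
    (u = a ∧ v = b) ∨ ∀ w ∈ Icc u v, collapse f L m w = collapse f L m u := by
  have hl := hL.prop
  obtain ⟨p, hp⟩ := exists_isTopChord hf hL ha hb hm0 hau (huv.trans hvb)
  obtain ⟨q, hq⟩ := exists_isTopChord hf hL ha hb hm0 (hau.trans huv) hvb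
  have p1 := hp.fst_le
  have p2 := hp.le_snd
  have p3 := hp.left
  have p4 := hp.right
  have q1 := hq.fst_le
  have q2 := hq.le_snd
  have q3 := hq.left
  have q4 := hq.right
  have hpe := hl.eq p hp.mem
  have hqe := hl.eq q hq.mem
  have cp : ∀ w ∈ Icc p.1 p.2, collapse f L m w = collapse f L m u := fun w hw =>
    collapse_eq_of_mem hf hL hp.mem hp.length_le hw ⟨p1, p2⟩
  have cq : ∀ w ∈ Icc q.1 q.2, collapse f L m w = collapse f L m v := fun w hw =>
    collapse_eq_of_mem hf hL hq.mem hq.length_le hw ⟨q1, q2⟩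
  rcases le_or_gt v p.2 with hv | hv
  · exact Or.inr fun w hw => cp w ⟨p1.trans hw.1, hw.2.trans hv⟩
  rcases le_or_gt q.1 u with hu | hu
  · exact Or.inr fun w hw => (cq w ⟨hu.trans hw.1, hw.2.trans q2⟩).trans he.symm
  have hpq : p.2 ≤ q.1 := by
    by_contra h
    exact hl.not_cross p hp.mem q hq.mem ⟨by linarith, not_le.1 h, by linarith⟩
  have hmem : (p.2, q.1) ∈ L := by
    refine IsLamination.mem_of_not_cross hL (by linarith) hpq (by linarith) ?_ ?_ ?_
    · rw [← hpe, ← collapse_eq_of_isTopChord hf hL ha hb h4 hp,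
        ← collapse_eq_of_isTopChord hf hL ha hb h4 hq, he]
    · rintro r hr ⟨r1, r2, r3⟩
      have hrb : r.2 ≤ b := by
        by_contra h
        exact h2 r hr ⟨by linarith, by linarith, not_le.1 h⟩
      have hrm := h3 r hr (by linarith) hrb (by rintro rfl; dsimp at r1; linarith)
      have hrq : q.2 ≤ r.2 := by
        by_contra h
        exact hl.not_cross r hr q hq.mem ⟨r2, r3, not_le.1 h⟩
      have := hq.longest r hr (by linarith) hrb (by linarith) (by linarith) hrm
      linarith
    · rintro r hr ⟨r1, r2, r3⟩
      have hra : a ≤ r.1 := by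
        by_contra h
        exact h1 r hr ⟨not_le.1 h, by linarith, by linarith⟩
      have hrm := h3 r hr hra (by linarith) (by rintro rfl; dsimp at r3; linarith)
      have hrp : r.1 ≤ p.1 := by
        by_contra h
        exact hl.not_cross p hp.mem r hr ⟨not_le.1 h, r1, r2⟩
      have := hp.longest r hr hra (by linarith) (by linarith) (by linarith) hrm
      linarith
  by_cases hab : (p.2, q.1) = (a, b)
  · rw [Prod.mk.injEq] at hab
    exact Or.inl ⟨by linarith, by linarith⟩
  · right
    have hlen := h3 _ hmem (by dsimp; linarith) (by dsimp; linarith) hab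
    have cr : ∀ w ∈ Icc p.2 q.1, collapse f L m w = collapse f L m u := fun w hw =>
      (collapse_eq_of_mem hf hL hmem hlen hw ⟨le_rfl, hpq⟩).trans (cp _ ⟨by linarith, le_rfl⟩)
    intro w hw
    rcases le_total w p.2 with h | h
    · exact cp w ⟨by linarith [hw.1], h⟩
    · rcases le_total w q.1 with h' | h'
      · exact cr w ⟨h, h'⟩
      · exact (cq w ⟨h', by linarith [hw.2]⟩).trans he.symm

/-- The region of the unit square lying outside all gaps of the lamination. -/
def gapFree (L : Set (ℝ × ℝ)) : Set (ℝ × ℝ) :=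
  {x | x ∈ Icc 0 1 ×ˢ Icc 0 1 ∧
    ∀ p ∈ L, ¬((gapDepth L p < x.1 ∧ x.1 < p.2 - p.1) ∧ p.1 < x.2 ∧ x.2 < p.2)}

lemma isCompact_gapFree (L : Set (ℝ × ℝ)) : IsCompact (gapFree L) := by
  refine (isCompact_Icc.prod isCompact_Icc).of_isClosed_subset ?_ fun x hx => hx.1
  have h : gapFree L = (Icc 0 1 ×ˢ Icc 0 1) ∩ ⋂ p ∈ L,
      (Ioo (gapDepth L p) (p.2 - p.1) ×ˢ Ioo p.1 p.2)ᶜ := by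
    ext x
    simp only [gapFree, mem_ofPred_eq, mem_inter_iff, mem_iInter, mem_compl_iff, mem_prod, mem_Ioo]
  rw [h]
  exact (isClosed_Icc.prod isClosed_Icc).inter (isClosed_biInter fun p _ =>
    (isOpen_Ioo.prod isOpen_Ioo).isClosed_compl)

lemma continuousOn_collapse (hf : Continuous f) (hL : Maximal (IsLamination f) L) :
    ContinuousOn (fun x : ℝ × ℝ => collapse f L x.1 x.2) (gapFree L) := by
  have hl := hL.prop
  intro x hx
  rw [ContinuousWithinAt]
  refine tendsto_of_seq_tendsto fun z hz => ?_
  rw [tendsto_nhdsWithin_iff] at hz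
  refine tendsto_of_subseq_tendsto fun ns hns => ?_
  have hz1 := hz.1.comp hns
  obtain ⟨N, hN⟩ := eventually_atTop.1 (hns.eventually hz.2)
  have hz2 : ∀ n, z (ns (n + N)) ∈ gapFree L := fun n => hN _ (by omega)
  have hz3 : Tendsto (fun n => z (ns (n + N))) atTop (𝓝 x) :=
    hz1.comp (tendsto_add_atTop_nat N)
  have hch : ∀ n, ∃ p, IsTopChord L 0 1 (z (ns (n + N))).1 (z (ns (n + N))).2 p ∧
      collapse f L (z (ns (n + N))).1 (z (ns (n + N))).2 = f p.1 := fun n =>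
    exists_isTopChord_collapse hf hL (hz2 n).1.1.1 (hz2 n).1.2.1 (hz2 n).1.2.2
  choose p hp hpc using hch
  obtain ⟨p0, hp0, φ, hφ, hlim⟩ := (IsLamination.isCompact hf hL).tendsto_subseq
    (fun n => (hp n).mem)
  have hzφ : Tendsto (fun n => z (ns (φ n + N))) atTop (𝓝 x) := hz3.comp hφ.tendsto_atTop
  have hs : Tendsto (fun n => (z (ns (φ n + N))).1) atTop (𝓝 x.1) :=
    (continuous_fst.tendsto x).comp hzφ
  have ht : Tendsto (fun n => (z (ns (φ n + N))).2) atTop (𝓝 x.2) :=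
    (continuous_snd.tendsto x).comp hzφ
  have hl1 : Tendsto (fun n => (p (φ n)).1) atTop (𝓝 p0.1) :=
    (continuous_fst.tendsto p0).comp hlim
  have hl2 : Tendsto (fun n => (p (φ n)).2) atTop (𝓝 p0.2) :=
    (continuous_snd.tendsto p0).comp hlim
  have a1 : p0.1 ≤ x.2 := le_of_tendsto_of_tendsto' hl1 ht fun n => (hp (φ n)).fst_le
  have a2 : x.2 ≤ p0.2 := le_of_tendsto_of_tendsto' ht hl2 fun n => (hp (φ n)).le_snd
  have a3 : p0.2 - p0.1 ≤ x.1 :=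
    le_of_tendsto_of_tendsto' (hl2.sub hl1) hs fun n => (hp (φ n)).length_le
  refine ⟨fun n => φ n + N, ?_⟩
  have hgoal : collapse f L x.1 x.2 = f p0.1 := by
    obtain ⟨q, hq, hqc⟩ := exists_isTopChord_collapse hf hL hx.1.1.1 hx.1.2.1 hx.1.2.2
    rw [hqc]
    have q1 := hq.fst_le
    have q2 := hq.le_snd
    have hpe := hl.eq p0 hp0
    have hqe := hl.eq q hq.mem
    rcases hq.subset_or_eq hl hp0 (hl.nonneg _ hp0) (hl.le_one _ hp0) a1 a2 a3 with h | h
    swap; · exact h.symm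
    rcases eq_or_lt_of_le q1 with e | e
    · rw [show p0.1 = q.1 by linarith]
    rcases eq_or_lt_of_le q2 with e' | e'
    · rw [hpe, hqe, show p0.2 = q.2 by linarith]
    rcases le_or_gt (q.2 - q.1) (p0.2 - p0.1) with g | g
    · rw [show p0.1 = q.1 by linarith]
    exfalso
    obtain ⟨r, hr1, hr2⟩ := exists_between g
    have ev1 : ∀ᶠ n in atTop, (p (φ n)).2 - (p (φ n)).1 < r :=
      (hl2.sub hl1).eventually (gt_mem_nhds hr1)
    have ev2 : ∀ᶠ n in atTop, q.1 < (z (ns (φ n + N))).2 := ht.eventually (lt_mem_nhds e)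
    have ev3 : ∀ᶠ n in atTop, (z (ns (φ n + N))).2 < q.2 := ht.eventually (gt_mem_nhds e')
    have ev4 : ∀ᶠ n in atTop, (z (ns (φ n + N))).1 < q.2 - q.1 := by
      filter_upwards [ev1, ev2, ev3] with n b1 b2 b3
      by_contra hcon
      have := (hp (φ n)).longest q hq.mem hq.left hq.right b2.le b3.le (not_lt.1 hcon)
      linarith
    have hxs : x.1 = q.2 - q.1 :=
      le_antisymm (le_of_tendsto hs (ev4.mono fun n h => h.le)) hq.length_le
    have hdep : x.1 ≤ gapDepth L q := by
      refine le_of_tendsto hs ?_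
      filter_upwards [ev2, ev3, ev4] with n b2 b3 b4
      by_contra hcon
      exact (hz2 (φ n)).2 q hq.mem ⟨⟨not_le.1 hcon, b4⟩, b2, b3⟩
    have hlt : max r (max (q.2 - q.1 - (x.2 - q.1)) (q.2 - q.1 - (q.2 - x.2))) < gapDepth L q := by
      refine lt_of_lt_of_le ?_ hdep
      rw [hxs]
      exact max_lt hr2 (max_lt (by linarith) (by linarith))
    obtain ⟨_, ⟨q', hq', c1, c2, c3, rfl⟩, c4⟩ := exists_lt_of_lt_csSup (by
      refine ⟨_, (q.1, q.1), IsLamination.diag_mem hL hq.left (by linarith [hq.right]), le_rfl,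
        by dsimp; linarith, ?_, rfl⟩
      intro hh
      have : q.2 = q.1 := by rw [← hh]
      linarith) hlt
    simp only [max_lt_iff] at c4
    have hne : q'.2 - q'.1 < q.2 - q.1 := by
      by_contra hcon
      exact c3 (Prod.ext (by linarith) (by linarith))
    have ev5 : ∀ᶠ n in atTop, q'.1 < (z (ns (φ n + N))).2 :=
      ht.eventually (lt_mem_nhds (by linarith))
    have ev6 : ∀ᶠ n in atTop, (z (ns (φ n + N))).2 < q'.2 :=
      ht.eventually (gt_mem_nhds (by linarith))
    have ev7 : ∀ᶠ n in atTop, q'.2 - q'.1 < (z (ns (φ n + N))).1 :=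
      hs.eventually (lt_mem_nhds (by linarith))
    obtain ⟨n, b1, b5, b6, b7⟩ := (ev1.and (ev5.and (ev6.and ev7))).exists
    have := (hp (φ n)).longest q' hq' (hl.nonneg _ hq') (hl.le_one _ hq') b5.le b6.le b7.le
    linarith
  rw [hgoal]
  change Tendsto (fun n => collapse f L (z (ns (φ n + N))).1 (z (ns (φ n + N))).2) atTop _
  simp only [hpc]
  exact (hf.tendsto _).comp hl1

end Lamination

section Reparametrization
open Filter Topology unitInterval

variable {X : Type} [MetricSpace X]

/-- The variation of `g` from the point `q` up to the point `t`, truncated at `1`. -/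
noncomputable def variationFrom (g : ℝ → X) (q t : ℝ) : ℝ :=
  sSup ((fun τ : ℝ => min 1 (dist (g (q + τ * max (t - q) 0)) (g q))) '' Icc 0 1)

variable {g : ℝ → X}

lemma continuous_variationFrom (hg : Continuous g) (q : ℝ) : Continuous (variationFrom g q) := by
  unfold variationFrom
  refine IsCompact.continuous_sSup (f := fun t τ : ℝ =>
    min 1 (dist (g (q + τ * max (t - q) 0)) (g q))) isCompact_Icc ?_
  have : Continuous fun x : ℝ × ℝ => min 1 (dist (g (q + x.2 * max (x.1 - q) 0)) (g q)) := by
    fun_prop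
  exact this

lemma bddAbove_variationFrom (g : ℝ → X) (q t : ℝ) :
    BddAbove ((fun τ : ℝ => min 1 (dist (g (q + τ * max (t - q) 0)) (g q))) '' Icc 0 1) := by
  refine ⟨1, ?_⟩
  rintro _ ⟨τ, _, rfl⟩
  exact min_le_left _ _

lemma le_variationFrom (g : ℝ → X) {q s t : ℝ} (hqs : q ≤ s) (hst : s ≤ t) :
    min 1 (dist (g s) (g q)) ≤ variationFrom g q t := by
  refine le_csSup (bddAbove_variationFrom g q t) ?_
  rcases eq_or_lt_of_le (hqs.trans hst) with h | h
  · refine ⟨0, by simp, ?_⟩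
    have : s = q := by linarith
    simp [this]
  · refine ⟨(s - q) / (t - q), ⟨by apply div_nonneg <;> linarith, ?_⟩, ?_⟩
    · rw [div_le_one (by linarith)]; linarith
    · have h' : t - q ≠ 0 := by linarith
      simp only [max_eq_left (show 0 ≤ t - q by linarith), div_mul_cancel₀ _ h']
      simp

lemma variationFrom_le (g : ℝ → X) {q t c : ℝ} (h0 : 0 ≤ c)
    (h : ∀ s, q ≤ s → s ≤ t → min 1 (dist (g s) (g q)) ≤ c) : variationFrom g q t ≤ c := by
  refine csSup_le (by simp) ?_
  rintro _ ⟨τ, hτ, rfl⟩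
  rcases le_total t q with ht | ht
  · simpa [max_eq_right (sub_nonpos.2 ht)] using h0
  · have h1 := sub_nonneg.2 ht
    simp only [max_eq_left h1]
    have := mul_le_of_le_one_left h1 hτ.2
    exact h _ (by nlinarith [hτ.1]) (by linarith)

lemma variationFrom_nonneg (g : ℝ → X) (q t : ℝ) : 0 ≤ variationFrom g q t := by
  refine le_csSup_of_le (bddAbove_variationFrom g q t) ⟨0, by simp, rfl⟩ ?_
  simp

lemma variationFrom_le_one (g : ℝ → X) (q t : ℝ) : variationFrom g q t ≤ 1 :=
  variationFrom_le g zero_le_one fun _ _ _ => min_le_left _ _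

lemma variationFrom_mono (g : ℝ → X) (q : ℝ) : Monotone (variationFrom g q) := fun _ _ h =>
  variationFrom_le g (variationFrom_nonneg g q _) fun _ h1 h2 => le_variationFrom g h1 (h2.trans h)

/-- A continuous monotone function which is constant on exactly the same intervals as `g`. -/
lemma exists_monotone_constancy (hg : Continuous g) : ∃ φ : ℝ → ℝ, Continuous φ ∧ Monotone φ ∧
    ∀ u v, u ≤ v → (φ u = φ v ↔ ∀ w ∈ Icc u v, g w = g u) := by
  have hS : ∀ t, Summable fun q : ℚ =>
      (1 / 2 : ℝ) ^ (Encodable.encode q) * variationFrom g q t := by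
    intro t
    refine Summable.of_nonneg_of_le (fun q => mul_nonneg (by positivity) (variationFrom_nonneg g q t))
      (fun q => mul_le_of_le_one_right (by positivity) (variationFrom_le_one g q t)) ?_
    exact summable_geometric_two_encode
  refine ⟨fun t => ∑' q : ℚ, (1 / 2 : ℝ) ^ (Encodable.encode q) * variationFrom g q t, ?_, ?_, ?_⟩
  · refine continuous_tsum (u := fun q : ℚ => (1 / 2 : ℝ) ^ (Encodable.encode q))
      (fun q => continuous_const.mul (continuous_variationFrom hg q)) summable_geometric_two_encode
      fun q t => ?_
    rw [Real.norm_of_nonneg (mul_nonneg (by positivity) (variationFrom_nonneg g q t))]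
    exact mul_le_of_le_one_right (by positivity) (variationFrom_le_one g q t)
  · intro u v h
    exact (hS u).tsum_le_tsum (fun q => mul_le_mul_of_nonneg_left (variationFrom_mono g q h)
      (by positivity)) (hS v)
  · intro u v huv
    constructor
    · intro he
      by_contra! hcon
      obtain ⟨w, hw, hne⟩ := hcon
      have huw : u < w := lt_of_le_of_ne hw.1 (by rintro rfl; exact hne rfl)
      have hev : ∀ᶠ q in 𝓝 u, g q ≠ g w := hg.continuousAt.eventually_ne hne.symm
      obtain ⟨l, hl, hlw⟩ := (mem_nhdsGE_iff_exists_Ico_subset' huw).1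
        (mem_nhdsWithin_of_mem_nhds hev)
      obtain ⟨q, hq1, hq2⟩ := exists_rat_btwn (lt_min hl huw)
      rw [lt_min_iff] at hq2
      have hgq : g q ≠ g w := hlw ⟨hq1.le, hq2.1⟩
      have h0 : variationFrom g q u ≤ 0 :=
        variationFrom_le g le_rfl fun s h1 h2 => by linarith
      have h1 : 0 < variationFrom g q v :=
        lt_of_lt_of_le (lt_min one_pos (dist_pos.2 hgq.symm)) (le_variationFrom g hq2.2.le hw.2)
      refine absurd he (ne_of_lt ((hS u).tsum_lt_tsum (i := q) (fun r =>
        mul_le_mul_of_nonneg_left (variationFrom_mono g r huv) (by positivity)) ?_ (hS v)))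
      exact mul_lt_mul_of_pos_left (h0.trans_lt h1) (by positivity)
    · intro hc
      refine tsum_congr fun q => ?_
      congr 1
      refine le_antisymm (variationFrom_mono g q huv) (variationFrom_le g (variationFrom_nonneg g q u) ?_)
      intro s h1 h2
      rcases le_total s u with hs | hs
      · exact le_variationFrom g h1 hs
      rcases le_total (q : ℝ) u with hq | hq
      · rw [hc s ⟨hs, h2⟩]
        exact le_variationFrom g hq le_rfl
      · rw [hc s ⟨hs, h2⟩, hc q ⟨hq, h1.trans h2⟩]
        simpa using variationFrom_nonneg g q u

/-- A nonconstant path factors through a path that is constant on no interval. -/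
lemma exists_light_factorization (γ : C(I, X)) (hne : ∃ t, γ t ≠ γ 0) :
    ∃ (γ' : C(I, X)) (Φ : C(I, I)), Monotone Φ ∧ Function.Surjective Φ ∧ Φ 0 = 0 ∧ Φ 1 = 1 ∧
      (∀ t, γ' (Φ t) = γ t) ∧ ∀ u v, u ≤ v → (Φ u = Φ v ↔ ∀ w ∈ Icc u v, γ w = γ u) := by
  obtain ⟨φ, hφc, hφm, hφ⟩ := exists_monotone_constancy
    (g := fun t : ℝ => γ (projIcc 0 1 zero_le_one t)) (by fun_prop)
  have hφ' : ∀ u v : I, u ≤ v → (φ u = φ v ↔ ∀ w ∈ Icc u v, γ w = γ u) := by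
    intro u v huv
    rw [hφ u v huv]
    constructor
    · intro h w hw
      have := h w ⟨hw.1, hw.2⟩
      simpa using this
    · intro h w hw
      have hw' : w ∈ Icc (0 : ℝ) 1 := ⟨u.2.1.trans hw.1, hw.2.trans v.2.2⟩
      have := h ⟨w, hw'⟩ ⟨hw.1, hw.2⟩
      simpa [projIcc_of_mem zero_le_one hw'] using this
  have h01 : φ 0 < φ 1 := by
    refine lt_of_le_of_ne (hφm zero_le_one) fun h => ?_
    obtain ⟨t, ht⟩ := hne
    exact ht ((hφ' 0 1 zero_le_one).1 (by simpa using h) t ⟨t.2.1, t.2.2⟩)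
  have hd : 0 < φ 1 - φ 0 := by linarith
  have hb0 : ∀ t : I, φ 0 ≤ φ t := fun t => hφm t.2.1
  have hb1 : ∀ t : I, φ t ≤ φ 1 := fun t => hφm t.2.2
  let Φ : C(I, I) := ⟨fun t => ⟨(φ t - φ 0) / (φ 1 - φ 0), div_nonneg (by linarith [hb0 t]) hd.le,
    (div_le_one hd).2 (by linarith [hb1 t])⟩, by fun_prop⟩
  have hΦ : ∀ u v, Φ u = Φ v ↔ φ u = φ v := by
    intro u v
    rw [Subtype.ext_iff]
    change (φ u - φ 0) / (φ 1 - φ 0) = (φ v - φ 0) / (φ 1 - φ 0) ↔ _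
    rw [div_left_inj' hd.ne', sub_left_inj]
  have hm : Monotone Φ := fun u v h =>
    Subtype.mk_le_mk.2 (div_le_div_of_nonneg_right (sub_le_sub_right (hφm h) _) hd.le)
  have hΦ0 : Φ 0 = 0 := by ext; simp [Φ]
  have hΦ1 : Φ 1 = 1 := by ext; simp [Φ, div_self hd.ne']
  have hsur : Function.Surjective Φ := by
    intro y
    have := intermediate_value_univ (0 : I) 1 Φ.continuous
    rw [hΦ0, hΦ1] at this
    exact this ⟨y.2.1, y.2.2⟩
  have hker : ∀ u v, Φ u = Φ v → γ u = γ v := by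
    intro u v h
    rcases le_total u v with h' | h'
    · exact ((hφ' u v h').1 ((hΦ u v).1 h) v ⟨h', le_rfl⟩).symm
    · exact (hφ' v u h').1 ((hΦ v u).1 h.symm) u ⟨h', le_rfl⟩
  have hfac : ∀ t, γ (Function.surjInv hsur (Φ t)) = γ t := fun t =>
    hker _ _ (Function.surjInv_eq hsur _)
  have hquot : IsQuotientMap Φ := Φ.continuous.isClosedMap.isQuotientMap Φ.continuous hsur
  refine ⟨⟨fun s => γ (Function.surjInv hsur s), ?_⟩, Φ, hm, hsur, hΦ0, hΦ1, hfac, fun u v h => by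
    rw [hΦ, hφ' u v h]⟩
  rw [hquot.continuous_iff]
  exact γ.continuous.congr fun t => (hfac t).symm

lemma exists_injective_of_imp_const (γ : C(I, X)) (h01 : γ 0 ≠ γ 1)
    (h : ∀ u v, u ≤ v → γ u = γ v → ∀ w ∈ Icc u v, γ w = γ u) :
    ∃ γ' : C(I, X), Function.Injective γ' ∧ γ' 0 = γ 0 ∧ γ' 1 = γ 1 ∧ range γ' = range γ := by
  obtain ⟨γ', Φ, -, hs, h0, h1, hf, hc⟩ := exists_light_factorization γ ⟨1, h01.symm⟩
  refine ⟨γ', ?_, by rw [← hf, h0], by rw [← hf, h1], ?_⟩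
  · intro x y hxy
    obtain ⟨u, rfl⟩ := hs x
    obtain ⟨v, rfl⟩ := hs y
    rw [hf, hf] at hxy
    rcases le_total u v with h' | h'
    · exact (hc u v h').2 (h u v h' hxy)
    · exact ((hc v u h').2 (h v u h' hxy.symm)).symm
  · have : (γ : I → X) = γ' ∘ Φ := funext fun t => (hf t).symm
    rw [this, range_comp, hs.range_eq, image_univ]

/-- Two distinct points of a path are joined by an injective path within its range. -/
lemma exists_arc (γ : C(I, X)) (h01 : γ 0 ≠ γ 1) : ∃ γ' : C(I, X), Function.Injective γ' ∧
    γ' 0 = γ 0 ∧ γ' 1 = γ 1 ∧ range γ' ⊆ range γ := by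
  set f : ℝ → X := fun t => γ (projIcc 0 1 zero_le_one t) with hfdef
  have hf : Continuous f := by fun_prop
  obtain ⟨L, hL⟩ := exists_maximal_isLamination f
  have hl := hL.prop
  have hgf : ∀ t : I, ((1 : ℝ), (t : ℝ)) ∈ gapFree L := by
    intro t
    refine ⟨⟨⟨zero_le_one, le_rfl⟩, t.2⟩, fun p hp h => ?_⟩
    have := hl.nonneg p hp
    have := hl.le_one p hp
    have := h.1.2
    dsimp at this
    linarith
  have hcont : Continuous fun t : I => collapse f L 1 t :=
    (continuousOn_collapse hf hL).comp_continuous (by fun_prop) hgf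
  let δ : C(I, X) := ⟨fun t => collapse f L 1 t, hcont⟩
  have hlen : ∀ q ∈ L, q.2 - q.1 ≤ 1 := fun q hq => by
    linarith [hl.nonneg q hq, hl.le_one q hq]
  have hrange : range δ ⊆ range γ := by
    rintro _ ⟨t, rfl⟩
    obtain ⟨s, -, hs⟩ := collapse_mem_image hf hL zero_le_one t.2.1 t.2.2
    exact ⟨_, hs⟩
  have h0 : δ 0 = γ 0 := by
    obtain ⟨p, hp, hpc⟩ := exists_isTopChord_collapse hf hL zero_le_one le_rfl zero_le_one
    have : p.1 = 0 := le_antisymm hp.fst_le hp.left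
    simpa [δ, this, hfdef] using hpc
  have h1 : δ 1 = γ 1 := by
    obtain ⟨p, hp, hpc⟩ := exists_isTopChord_collapse hf hL zero_le_one zero_le_one le_rfl
    have : p.2 = 1 := le_antisymm hp.right hp.le_snd
    rw [hl.eq p hp.mem, this] at hpc
    simpa [δ, hfdef] using hpc
  obtain ⟨γ', hi, e0, e1, er⟩ := exists_injective_of_imp_const δ (by rwa [h0, h1]) (by
    intro u v huv he
    have key := collapse_eq_imp hf hL (m := 1) le_rfl le_rfl zero_le_one
      (fun q hq h => by linarith [h.1, hl.nonneg q hq])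
      (fun q hq h => by linarith [h.2.2, hl.le_one q hq]) (fun q hq _ _ _ => hlen q hq)
      (fun q hq _ => Or.inr (Or.inr ⟨hl.nonneg q hq, hl.le_one q hq⟩)) u.2.1 huv v.2.2 he
    rcases key with ⟨hu, hv⟩ | key
    · have hu' : u = 0 := Subtype.ext hu
      have hv' : v = 1 := Subtype.ext hv
      rw [hu', hv', h0, h1] at he
      exact absurd he h01
    · exact fun w hw => key w ⟨hw.1, hw.2⟩)
  exact ⟨γ', hi, e0.trans h0, e1.trans h1, er ▸ hrange⟩

lemma isJordanCurve_range (γ : C(I, X)) (h01 : γ 0 = γ 1)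
    (h : ∀ u v, u < v → γ u = γ v → u = 0 ∧ v = 1) : IsJordanCurve (range γ) := by
  have : Fact ((0 : ℝ) < 1) := ⟨one_pos⟩
  set f : ℝ → X := fun t => γ (projIcc 0 1 zero_le_one t) with hfdef
  have hval : ∀ t : I, f t = γ t := fun t => by simp [hfdef]
  have hf : f 0 = f 1 := by simpa [hfdef] using h01
  have hc : Continuous (AddCircle.liftIco 1 0 f) :=
    AddCircle.liftIco_zero_continuous hf (by fun_prop)
  have hinj : Function.Injective (AddCircle.liftIco 1 0 f) := by
    intro x y hxy
    obtain ⟨a, ha, rfl⟩ := AddCircle.eq_coe_Ico x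
    obtain ⟨b, hb, rfl⟩ := AddCircle.eq_coe_Ico y
    rw [AddCircle.liftIco_zero_coe_apply ha, AddCircle.liftIco_zero_coe_apply hb] at hxy
    have key : ∀ a b : ℝ, a ∈ Ico (0 : ℝ) 1 → b ∈ Ico (0 : ℝ) 1 → f a = f b → ¬ a < b := by
      intro a b ha hb he hab
      have := h ⟨a, ha.1, ha.2.le⟩ ⟨b, hb.1, hb.2.le⟩ hab
        (by rw [← hval, ← hval]; exact he)
      have hb1 : b = 1 := congrArg Subtype.val this.2
      linarith [hb.2]
    rw [le_antisymm (not_lt.1 (key b a hb ha hxy.symm)) (not_lt.1 (key a b ha hb hxy))]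
  have hr : range (AddCircle.liftIco 1 0 f) = range γ := by
    ext x
    constructor
    · rintro ⟨y, rfl⟩
      obtain ⟨a, ha, rfl⟩ := AddCircle.eq_coe_Ico y
      rw [AddCircle.liftIco_zero_coe_apply ha]
      exact ⟨_, rfl⟩
    · rintro ⟨t, rfl⟩
      rcases eq_or_lt_of_le t.2.2 with ht | ht
      · refine ⟨((0 : ℝ) : AddCircle (1 : ℝ)), ?_⟩
        rw [AddCircle.liftIco_zero_coe_apply ⟨le_rfl, one_pos⟩, hf, ← ht, hval]
      · refine ⟨((t : ℝ) : AddCircle (1 : ℝ)), ?_⟩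
        rw [AddCircle.liftIco_zero_coe_apply ⟨t.2.1, ht⟩, hval]
  rw [← hr]
  exact ⟨(hc.isClosedEmbedding hinj).isEmbedding.toHomeomorph⟩

/-- A loop whose only coincidences are its endpoints and intervals of constancy. -/
structure IsJordanLoop (γ : C(I, X)) : Prop where
  loop : γ 0 = γ 1
  imp : ∀ u v, u ≤ v → γ u = γ v → (u = 0 ∧ v = 1) ∨ ∀ w ∈ Icc u v, γ w = γ u

lemma IsJordanLoop.isJordanCurve_range {γ : C(I, X)} (h : IsJordanLoop γ)
    (hne : ∃ t, γ t ≠ γ 0) : IsJordanCurve (range γ) := by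
  obtain ⟨γ', Φ, hm, hs, h0, h1, hf, hc⟩ := exists_light_factorization γ hne
  have hr : range γ = range γ' := by
    have : (γ : I → X) = γ' ∘ Φ := funext fun t => (hf t).symm
    rw [this, range_comp, hs.range_eq, image_univ]
  rw [hr]
  refine _root_.isJordanCurve_range γ' (by
    rw [show γ' 0 = γ 0 by rw [← hf, h0], show γ' 1 = γ 1 by rw [← hf, h1], h.loop]) ?_
  intro x y hxy he
  obtain ⟨u, rfl⟩ := hs x
  obtain ⟨v, rfl⟩ := hs y
  rw [hf, hf] at he
  have huv : u ≤ v := by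
    by_contra hcon
    exact (hm (not_le.1 hcon).le).not_gt hxy
  rcases h.imp u v huv he with ⟨rfl, rfl⟩ | hk
  · exact ⟨h0, h1⟩
  · exact absurd ((hc u v huv).2 hk) hxy.ne

end Reparametrization

section GapBoxes

variable {X : Type} {f : ℝ → X} {L : Set (ℝ × ℝ)}

/-- The open box of the gap of a lamination below the chord `p`. -/
def gapBox (L : Set (ℝ × ℝ)) (p : ℝ × ℝ) : Set (ℝ × ℝ) :=
  Ioo (gapDepth L p) (p.2 - p.1) ×ˢ Ioo p.1 p.2

lemma isOpen_gapBox (L : Set (ℝ × ℝ)) (p : ℝ × ℝ) : IsOpen (gapBox L p) :=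
  isOpen_Ioo.prod isOpen_Ioo

lemma mem_gapFree_iff {z : ℝ × ℝ} :
    z ∈ gapFree L ↔ z ∈ Icc 0 1 ×ˢ Icc 0 1 ∧ ∀ p ∈ L, z ∉ gapBox L p := Iff.rfl

lemma disjoint_gapBox (hl : IsLamination f L) {p q : ℝ × ℝ} (hp : p ∈ L) (hq : q ∈ L)
    (hpq : p ≠ q) : Disjoint (gapBox L p) (gapBox L q) := by
  rw [Set.disjoint_left]
  rintro z ⟨⟨a1, a2⟩, a3, a4⟩ ⟨⟨b1, b2⟩, b3, b4⟩
  have h1 : ¬ (p.1 ≤ q.1 ∧ q.2 ≤ p.2) := fun h => by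
    linarith [le_gapDepth hq h.1 h.2 hpq.symm]
  have h2 : ¬ (q.1 ≤ p.1 ∧ p.2 ≤ q.2) := fun h => by
    linarith [le_gapDepth hp h.1 h.2 hpq]
  rcases le_total p.1 q.1 with h | h
  · have h3 : p.2 < q.2 := by by_contra hc; exact h1 ⟨h, not_lt.1 hc⟩
    have h4 : p.1 < q.1 := by by_contra hc; exact h2 ⟨not_lt.1 hc, h3.le⟩
    exact hl.not_cross p hp q hq ⟨h4, b3.trans a4, h3⟩
  · have h3 : q.2 < p.2 := by by_contra hc; exact h2 ⟨h, not_lt.1 hc⟩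
    have h4 : q.1 < p.1 := by by_contra hc; exact h1 ⟨not_lt.1 hc, h3.le⟩
    exact hl.not_cross q hq p hp ⟨h4, a3.trans b4, h3⟩

/-- The chords of a lamination that have a gap below them. -/
def gaps (L : Set (ℝ × ℝ)) : Set (ℝ × ℝ) := {p | p ∈ L ∧ p.1 < p.2 ∧ gapDepth L p < p.2 - p.1}

lemma closure_gapBox {p : ℝ × ℝ} (hp : p ∈ gaps L) :
    closure (gapBox L p) = Icc (gapDepth L p) (p.2 - p.1) ×ˢ Icc p.1 p.2 := by
  rw [gapBox, closure_prod_eq, closure_Ioo hp.2.2.ne, closure_Ioo hp.2.1.ne]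

lemma mem_gaps_of_mem_gapBox {p z : ℝ × ℝ} (hp : p ∈ L) (hz : z ∈ gapBox L p) : p ∈ gaps L :=
  ⟨hp, hz.2.1.trans hz.2.2, hz.1.1.trans hz.1.2⟩

lemma mem_unitSquare_of_mem_closure_gapBox (hL : Maximal (IsLamination f) L) {p z : ℝ × ℝ}
    (hp : p ∈ gaps L) (hz : z ∈ closure (gapBox L p)) :
    z ∈ Icc (0 : ℝ) 1 ×ˢ Icc (0 : ℝ) 1 := by
  rw [closure_gapBox hp] at hz
  have h0 := gapDepth_nonneg hL hp.1 hp.2.1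
  have h1 := hL.prop.nonneg p hp.1
  have h2 := hL.prop.le_one p hp.1
  exact ⟨⟨h0.trans hz.1.1, hz.1.2.trans (by linarith)⟩, h1.trans hz.2.1, hz.2.2.trans h2⟩

lemma frontier_gapBox_subset (hL : Maximal (IsLamination f) L) {p : ℝ × ℝ} (hp : p ∈ gaps L) :
    frontier (gapBox L p) ⊆ gapFree L := by
  intro z hz
  have hzc := frontier_subset_closure hz
  refine mem_gapFree_iff.2 ⟨mem_unitSquare_of_mem_closure_gapBox hL hp hzc, fun q hq hzq => ?_⟩
  by_cases hpq : p = q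
  · subst hpq
    rw [(isOpen_gapBox L p).frontier_eq] at hz
    exact hz.2 hzq
  · obtain ⟨w, hw1, hw2⟩ := mem_closure_iff.1 hzc _ (isOpen_gapBox L q) hzq
    exact (disjoint_gapBox hL.prop hp.1 hq hpq).le_bot ⟨hw2, hw1⟩

lemma bottom_gapBox_mem (hL : Maximal (IsLamination f) L) {p : ℝ × ℝ} (hp : p ∈ gaps L) {t : ℝ}
    (ht : t ∈ Icc p.1 p.2) : (gapDepth L p, t) ∈ gapFree L := by
  refine frontier_gapBox_subset hL hp ?_
  rw [(isOpen_gapBox L p).frontier_eq, closure_gapBox hp]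
  exact ⟨⟨⟨le_rfl, hp.2.2.le⟩, ht⟩, fun h => lt_irrefl _ h.1.1⟩

lemma top_gapBox_mem (hL : Maximal (IsLamination f) L) {p : ℝ × ℝ} (hp : p ∈ gaps L) {t : ℝ}
    (ht : t ∈ Icc p.1 p.2) : (p.2 - p.1, t) ∈ gapFree L := by
  refine frontier_gapBox_subset hL hp ?_
  rw [(isOpen_gapBox L p).frontier_eq, closure_gapBox hp]
  exact ⟨⟨⟨hp.2.2.le, le_rfl⟩, ht⟩, fun h => lt_irrefl _ h.1.2⟩

lemma finite_large_gaps (hL : Maximal (IsLamination f) L) {η : ℝ} (hη : 0 < η) :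
    {p : gaps L | η ≤ p.1.2 - p.1.1 - gapDepth L p ∧ η ≤ p.1.2 - p.1.1}.Finite := by
  refine (MeasureTheory.Measure.finite_const_le_meas_of_disjoint_iUnion
    (MeasureTheory.volume : MeasureTheory.Measure (ℝ × ℝ)) (ε := ENNReal.ofReal η * ENNReal.ofReal η)
    (by positivity) (As := fun p : gaps L => gapBox L p)
    (fun p => (isOpen_gapBox L p).measurableSet)
    (fun p q hpq => disjoint_gapBox hL.prop p.2.1 q.2.1 (fun h => hpq (Subtype.ext h)))
    ?_).subset ?_
  · refine ne_top_of_le_ne_top ((isCompact_Icc.prod isCompact_Icc).measure_ne_top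
      (μ := MeasureTheory.volume)) (MeasureTheory.measure_mono (iUnion_subset fun p z hz =>
        mem_unitSquare_of_mem_closure_gapBox hL p.2 (subset_closure hz)))
  · rintro p ⟨h1, h2⟩
    rw [mem_ofPred_eq, gapBox, MeasureTheory.Measure.volume_eq_prod, MeasureTheory.Measure.prod_prod,
      Real.volume_Ioo, Real.volume_Ioo]
    gcongr

end GapBoxes

section Filling
open Filter Topology unitInterval

variable {X : Type} [MetricSpace X]

lemma IsPreconnected.inter_frontier_of_isOpen {E : Type*} [TopologicalSpace E] {t U : Set E}
    (ht : IsPreconnected t) (hU : IsOpen U) (h1 : (t ∩ U).Nonempty) (h2 : (t ∩ Uᶜ).Nonempty) :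
    (t ∩ frontier U).Nonempty := by
  by_contra hcon
  rw [not_nonempty_iff_eq_empty, hU.frontier_eq] at hcon
  have hout : ∀ x ∈ t, x ∉ U → x ∉ closure U := fun x hx hxU hxc =>
    (hcon ▸ ⟨hx, hxc, hxU⟩ : x ∈ (∅ : Set E))
  obtain ⟨y, hy, hyU⟩ := h2
  obtain ⟨z, -, hz1, hz2⟩ := ht U (closure U)ᶜ hU isClosed_closure.isOpen_compl
    (fun x hx => or_iff_not_imp_left.2 (hout x hx)) h1 ⟨y, hy, hout y hy hyU⟩
  exact hz2 (subset_closure hz1)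

/-- A map on a union of a closed set `A` and open sets `U i` with frontiers in `A` is continuous
if it is continuous on each piece and the oscillations on the `U i` tend to zero. -/
lemma continuousOn_union_of_finite_large {E ι : Type*} [PseudoMetricSpace E]
    (hE : ∀ (x : E) r, IsPreconnected (ball x r)) {A : Set E} (hA : IsClosed A) {U : ι → Set E}
    (hU : ∀ i, IsOpen (U i)) (hfr : ∀ i, frontier (U i) ⊆ A) (hd : ∀ i, Disjoint (U i) A)
    {F : E → X} (hFA : ContinuousOn F A)
    (hFU : ∀ i, ContinuousOn F (closure (U i)))
    (hfin : ∀ ε > 0, {i | ¬ ∀ x ∈ closure (U i), ∀ y ∈ closure (U i), dist (F x) (F y) ≤ ε}.Finite) :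
    ContinuousOn F (A ∪ ⋃ i, U i) := by
  rintro z (hz | hz)
  · rw [Metric.continuousWithinAt_iff]
    intro ε hε
    set S := {i | ¬ ∀ x ∈ closure (U i), ∀ y ∈ closure (U i), dist (F x) (F y) ≤ ε / 2}
    have hS : S.Finite := hfin _ (half_pos hε)
    have hcS : ContinuousOn F (⋃ i : S, closure (U i)) := by
      have := hS.to_subtype
      exact (locallyFinite_of_finite _).continuousOn_iUnion (fun i => isClosed_closure)
        fun i => hFU i
    have hclS : IsClosed (⋃ i : S, closure (U i)) := by
      have := hS.to_subtype
      exact isClosed_iUnion_of_finite fun i => isClosed_closure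
    have hc := hFA.union_of_isClosed hcS hA hclS
    obtain ⟨δ, hδ, hb⟩ := Metric.continuousWithinAt_iff.1 (hc z (Or.inl hz)) (ε / 2) (half_pos hε)
    refine ⟨δ, hδ, fun {w} hw hwz => ?_⟩
    rcases hw with hw | hw
    · exact (hb (Or.inl hw) hwz).trans (half_lt_self hε)
    · obtain ⟨i, hi⟩ := mem_iUnion.1 hw
      by_cases hiS : i ∈ S
      · exact (hb (Or.inr (mem_iUnion.2 ⟨⟨i, hiS⟩, subset_closure hi⟩)) hwz).trans (half_lt_self hε)
      · obtain ⟨v, hv, hvf⟩ := (hE z δ).inter_frontier_of_isOpen (hU i) ⟨w, hwz, hi⟩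
          ⟨z, mem_ball_self hδ, fun h => (hd i).le_bot ⟨h, hz⟩⟩
        have h1 := hb (Or.inl (hfr i hvf)) hv
        have h2 := not_not.1 hiS w (subset_closure hi) v (frontier_subset_closure hvf)
        linarith [dist_triangle (F w) (F v) (F z)]
  · obtain ⟨i, hi⟩ := mem_iUnion.1 hz
    exact ((hFU i).continuousAt (mem_of_superset ((hU i).mem_nhds hi) subset_closure)).continuousWithinAt

/-- A null-homotopy, relative to the endpoints, of a loop. -/
structure IsFilling (γ : C(I, X)) (H : C(I × I, X)) : Prop where
  bottom : ∀ t, H (0, t) = γ t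
  top : ∀ t, H (1, t) = γ 0
  left : ∀ s, H (s, 0) = γ 0
  right : ∀ s, H (s, 1) = γ 0

/-- Fillings can be selected so that fillings of small loops are small. -/
lemma exists_filling_selection {P : C(I, X) → Prop} {V : Set X}
    (hP : ∀ γ, P γ → γ 0 = γ 1 ∧ range γ ⊆ V ∧ ∃ H, IsFilling γ H ∧ range H ⊆ V)
    (hsmall : ∀ ε > 0, ∃ δ > 0, ∀ γ, P γ → (∀ t, dist (γ t) (γ 0) < δ) →
      ∃ H, IsFilling γ H ∧ range H ⊆ V ∧ ∀ z, dist (H z) (γ 0) < ε) :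
    ∃ K : C(I, X) → C(I × I, X), (∀ γ, P γ → IsFilling γ (K γ) ∧ range (K γ) ⊆ V) ∧
      ∀ ε > 0, ∃ δ > 0, ∀ γ, P γ → (∀ t, dist (γ t) (γ 0) < δ) →
        ∀ z, dist (K γ z) (γ 0) < ε := by
  have key : ∀ γ, ∃ H, P γ → IsFilling γ H ∧ range H ⊆ V ∧ ∀ H', IsFilling γ H' → range H' ⊆ V →
      dist H (ContinuousMap.const _ (γ 0)) ≤
        dist H' (ContinuousMap.const _ (γ 0)) + dist γ (ContinuousMap.const _ (γ 0)) := by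
    intro γ
    by_cases hγ : P γ
    swap; · exact ⟨ContinuousMap.const _ (γ 0), fun h => absurd h hγ⟩
    obtain ⟨hl, hV, H0, hH0, hH0V⟩ := hP γ hγ
    by_cases hc : γ = ContinuousMap.const _ (γ 0)
    · refine ⟨ContinuousMap.const _ (γ 0), fun _ => ⟨⟨fun t => ?_, fun _ => rfl, fun _ => rfl,
        fun _ => rfl⟩, ?_, fun H' _ _ => ?_⟩⟩
      · rw [hc]; rfl
      · rintro _ ⟨z, rfl⟩; exact hV ⟨0, rfl⟩
      · rw [dist_self]; positivity
    · have hpos := dist_pos.2 hc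
      set S := (fun H => dist H (ContinuousMap.const (I × I) (γ 0))) ''
        {H | IsFilling γ H ∧ range H ⊆ V}
      have hbdd : BddBelow S := ⟨0, by rintro _ ⟨H, _, rfl⟩; exact dist_nonneg⟩
      obtain ⟨_, ⟨H, hH, rfl⟩, hlt⟩ := exists_lt_of_csInf_lt (s := S) ⟨_, H0, ⟨hH0, hH0V⟩, rfl⟩
        (lt_add_of_pos_right (sInf S) hpos)
      refine ⟨H, fun _ => ⟨hH.1, hH.2, fun H' h1 h2 => hlt.le.trans ?_⟩⟩
      gcongr
      exact csInf_le hbdd ⟨H', ⟨h1, h2⟩, rfl⟩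
  choose K hK using key
  refine ⟨K, fun γ hγ => ⟨(hK γ hγ).1, (hK γ hγ).2.1⟩, fun ε hε => ?_⟩
  obtain ⟨δ, hδ, hs⟩ := hsmall (ε / 2) (half_pos hε)
  refine ⟨min δ (ε / 2), lt_min hδ (half_pos hε), fun γ hγ hlt z => ?_⟩
  obtain ⟨H, h1, h2, h3⟩ := hs γ hγ fun t => (hlt t).trans_le (min_le_left _ _)
  have h4 := (hK γ hγ).2.2 H h1 h2
  have h5 : dist H (ContinuousMap.const _ (γ 0)) < ε / 2 :=
    (ContinuousMap.dist_lt_iff (half_pos hε)).2 h3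
  have h6 : dist γ (ContinuousMap.const _ (γ 0)) < ε / 2 :=
    (ContinuousMap.dist_lt_iff (half_pos hε)).2 fun t => (hlt t).trans_le (min_le_right _ _)
  have h7 : dist (K γ z) (γ 0) ≤ _ := ContinuousMap.dist_apply_le_dist (f := K γ)
    (g := ContinuousMap.const _ (γ 0)) z
  linarith

variable {f : ℝ → X} {L : Set (ℝ × ℝ)}

lemma collapse_fst (hf : Continuous f) (hL : Maximal (IsLamination f) L) {p : ℝ × ℝ} (hp : p ∈ L)
    {s : ℝ} (hs : 0 ≤ s) (hsp : s ≤ p.2 - p.1) : collapse f L s p.1 = f p.1 := by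
  have hl := hL.prop
  have p1 := hl.le p hp
  obtain ⟨q, hq, hqc⟩ := exists_isTopChord_collapse hf hL hs (hl.nonneg p hp)
    (p1.trans (hl.le_one p hp))
  rw [hqc]
  have q1 := hq.fst_le
  have q2 := hq.le_snd
  have q3 := hq.length_le
  rcases eq_or_lt_of_le q1 with h | h
  · rw [h]
  · rcases eq_or_lt_of_le q2 with h' | h'
    · rw [hl.eq q hq.mem, h']
    · exact absurd ⟨h, h', by linarith⟩ (hl.not_cross q hq.mem p hp)

lemma collapse_snd (hf : Continuous f) (hL : Maximal (IsLamination f) L) {p : ℝ × ℝ} (hp : p ∈ L)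
    {s : ℝ} (hs : 0 ≤ s) (hsp : s ≤ p.2 - p.1) : collapse f L s p.2 = f p.1 := by
  have hl := hL.prop
  have p1 := hl.le p hp
  obtain ⟨q, hq, hqc⟩ := exists_isTopChord_collapse hf hL hs ((hl.nonneg p hp).trans p1)
    (hl.le_one p hp)
  rw [hqc, hl.eq p hp]
  have q1 := hq.fst_le
  have q2 := hq.le_snd
  have q3 := hq.length_le
  rcases eq_or_lt_of_le q1 with h | h
  · rw [h]
  · rcases eq_or_lt_of_le q2 with h' | h'
    · rw [hl.eq q hq.mem, h']
    · exact absurd ⟨by linarith, h, h'⟩ (hl.not_cross p hp q hq.mem)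

lemma collapse_top (hf : Continuous f) (hL : Maximal (IsLamination f) L) {p : ℝ × ℝ} (hp : p ∈ L)
    {s : ℝ} (hsp : p.2 - p.1 = s) {t : ℝ} (ht : t ∈ Icc p.1 p.2) : collapse f L s t = f p.1 := by
  have p1 := hL.prop.le p hp
  rw [collapse_eq_of_mem hf hL hp hsp.le ht ⟨le_rfl, p1⟩]
  exact collapse_fst hf hL hp (by linarith) hsp.ge

lemma collapse_zero (hf : Continuous f) (hL : Maximal (IsLamination f) L) {t : ℝ} (h0 : 0 ≤ t)
    (h1 : t ≤ 1) : collapse f L 0 t = f t := by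
  have := collapse_top hf hL (IsLamination.diag_mem hL h0 h1) (s := 0) (by simp) ⟨le_rfl, le_rfl⟩
  exact this

lemma affine_mem_Icc {a b : ℝ} (hab : a ≤ b) (t : I) : a + t * (b - a) ∈ Icc a b := by
  have := t.2.1
  have := t.2.2
  constructor <;> nlinarith

/-- The loop at the bottom of a gap is a Jordan loop. -/
lemma exists_gapLoop (hf : Continuous f) (hL : Maximal (IsLamination f) L) {p : ℝ × ℝ}
    (hp : p ∈ gaps L) : ∃ γ : C(I, X), IsJordanLoop γ ∧ γ 0 = f p.1 ∧
      ∀ t : I, γ t = collapse f L (gapDepth L p) (p.1 + t * (p.2 - p.1)) := by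
  have hl := hL.prop
  have hlt := hp.2.1
  have h0 := gapDepth_nonneg hL hp.1 hlt
  have hc : Continuous fun t : I => collapse f L (gapDepth L p) (p.1 + t * (p.2 - p.1)) :=
    (continuousOn_collapse hf hL).comp_continuous
      (f := fun t : I => (gapDepth L p, p.1 + t * (p.2 - p.1))) (by fun_prop)
      fun t => bottom_gapBox_mem hL hp (affine_mem_Icc hlt.le t)
  have e0 := collapse_fst hf hL hp.1 h0 hp.2.2.le
  have e1 := collapse_snd hf hL hp.1 h0 hp.2.2.le
  refine ⟨⟨_, hc⟩, ⟨?_, fun u v huv he => ?_⟩, ?_, fun _ => rfl⟩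
  · simp [e0, e1]
  · have hd : 0 < p.2 - p.1 := by linarith
    have huv' : (u : ℝ) ≤ v := huv
    have key := collapse_eq_imp hf hL (hl.nonneg p hp.1) (hl.le_one p hp.1) h0
      (fun q hq h => hl.not_cross q hq p hp.1 h) (fun q hq h => hl.not_cross p hp.1 q hq h)
      (fun q hq h1 h2 h3 => le_gapDepth hq h1 h2 h3) (fun q hq h => by
        by_contra! hcon
        obtain ⟨c1, c2, c3⟩ := hcon
        rcases le_or_gt p.1 q.1 with g | g
        · rcases eq_or_lt_of_le g with g' | g'
          · linarith [c3 g, hp.2.2]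
          · exact hl.not_cross p hp.1 q hq ⟨g', c2, c3 g⟩
        · refine hl.not_cross q hq p hp.1 ⟨g, c1, ?_⟩
          linarith [hp.2.2])
      (affine_mem_Icc hlt.le u).1 (by gcongr) (affine_mem_Icc hlt.le v).2 he
    rcases key with ⟨k1, k2⟩ | key
    · left
      constructor
      · have : (u : ℝ) * (p.2 - p.1) = 0 := by linarith
        exact Subtype.ext ((mul_eq_zero.1 this).resolve_right hd.ne')
      · have : ((v : ℝ) - 1) * (p.2 - p.1) = 0 := by linarith
        have h := (mul_eq_zero.1 this).resolve_right hd.ne'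
        exact Subtype.ext (by simpa [sub_eq_zero] using h)
    · right
      intro w hw
      have h1 : (u : ℝ) ≤ w := hw.1
      have h2 : (w : ℝ) ≤ v := hw.2
      exact key _ ⟨by gcongr, by gcongr⟩
  · simpa using e0

/-- If the Jordan loops in `V` can be filled, small ones by small fillings, then every loop in `V`
can be filled. -/
theorem exists_filling {V : Set X}
    (hJ : ∀ γ : C(I, X), IsJordanLoop γ → range γ ⊆ V → ∃ H, IsFilling γ H ∧ range H ⊆ V)
    (hsmall : ∀ ε > 0, ∃ δ > 0, ∀ γ : C(I, X), IsJordanLoop γ → range γ ⊆ V →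
      (∀ t, dist (γ t) (γ 0) < δ) →
      ∃ H, IsFilling γ H ∧ range H ⊆ V ∧ ∀ z, dist (H z) (γ 0) < ε)
    (γ : C(I, X)) (h01 : γ 0 = γ 1) (hV : range γ ⊆ V) : ∃ H, IsFilling γ H ∧ range H ⊆ V := by
  obtain ⟨K, hK, hKs⟩ := exists_filling_selection (P := fun γ => IsJordanLoop γ ∧ range γ ⊆ V)
    (V := V) (fun γ h => ⟨h.1.loop, h.2, hJ γ h.1 h.2⟩) (fun ε hε => by
      obtain ⟨δ, hδ, h⟩ := hsmall ε hε
      exact ⟨δ, hδ, fun γ hγ => h γ hγ.1 hγ.2⟩)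
  set f : ℝ → X := fun t => γ (projIcc 0 1 zero_le_one t) with hfdef
  have hf : Continuous f := by fun_prop
  have hfI : ∀ t : I, f t = γ t := fun t => by simp [hfdef]
  have hf01 : f 0 = f 1 := by simpa [hfdef] using h01
  obtain ⟨L, hL⟩ := exists_maximal_isLamination f
  have hl := hL.prop
  have hA := isCompact_gapFree L
  have hcA := continuousOn_collapse hf hL
  have h01L : ((0 : ℝ), (1 : ℝ)) ∈ L := by
    refine IsLamination.mem_of_not_cross hL le_rfl zero_le_one le_rfl hf01 ?_ ?_
    · exact fun q hq h => by linarith [hl.le_one q hq, h.2.2]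
    · exact fun q hq h => by linarith [hl.nonneg q hq, h.1]
  have hcV : ∀ s t, 0 ≤ s → 0 ≤ t → t ≤ 1 → collapse f L s t ∈ V := by
    intro s t hs h0 h1
    obtain ⟨u, -, hu⟩ := collapse_mem_image hf hL hs h0 h1
    exact hu ▸ hV ⟨_, rfl⟩
  have hgap : ∀ p : gaps L, ∃ γ : C(I, X), IsJordanLoop γ ∧ γ 0 = f p.1.1 ∧
      ∀ t : I, γ t = collapse f L (gapDepth L p) (p.1.1 + t * (p.1.2 - p.1.1)) :=
    fun p => exists_gapLoop hf hL p.2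
  choose g hgJ hg0 hg using hgap
  have hgP : ∀ p, IsJordanLoop (g p) ∧ range (g p) ⊆ V := by
    refine fun p => ⟨hgJ p, ?_⟩
    rintro _ ⟨t, rfl⟩
    rw [hg]
    have := affine_mem_Icc p.2.2.1.le t
    exact hcV _ _ (gapDepth_nonneg hL p.2.1 p.2.2.1) ((hl.nonneg _ p.2.1).trans this.1)
      (this.2.trans (hl.le_one _ p.2.1))
  let ρ : gaps L → ℝ × ℝ → I := fun p z =>
    projIcc 0 1 zero_le_one ((z.1 - gapDepth L p) / (p.1.2 - p.1.1 - gapDepth L p))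
  let τ : gaps L → ℝ × ℝ → I := fun p z =>
    projIcc 0 1 zero_le_one ((z.2 - p.1.1) / (p.1.2 - p.1.1))
  let B : gaps L → ℝ × ℝ → X := fun p z => K (g p) (ρ p z, τ p z)
  have hBc : ∀ p, Continuous (B p) := fun p => by
    simp only [B, ρ, τ]
    fun_prop
  classical
  let F : ℝ × ℝ → X := fun z =>
    if h : ∃ p : gaps L, z ∈ gapBox L p then B h.choose z else collapse f L z.1 z.2
  have hFA : ∀ z ∈ gapFree L, F z = collapse f L z.1 z.2 := by
    intro z hz
    exact dif_neg fun ⟨p, hp⟩ => hz.2 p p.2.1 hp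
  have hFU : ∀ p : gaps L, ∀ z ∈ gapBox L p, F z = B p z := by
    intro p z hz
    have h : ∃ p : gaps L, z ∈ gapBox L p := ⟨p, hz⟩
    have : h.choose = p := by
      by_contra hne
      exact (disjoint_gapBox hl h.choose.2.1 p.2.1 (fun h => hne (Subtype.ext h))).le_bot
        ⟨h.choose_spec, hz⟩
    simp only [F, dif_pos h, this]
  have hFB : ∀ p : gaps L, ∀ z ∈ closure (gapBox L p), F z = B p z := by
    intro p z hz
    by_cases hzU : z ∈ gapBox L p
    · exact hFU p z hzU
    have hzA : z ∈ gapFree L := frontier_gapBox_subset hL p.2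
      (by rw [(isOpen_gapBox L p).frontier_eq]; exact ⟨hz, hzU⟩)
    rw [hFA z hzA]
    have hfill := (hK _ (hgP p)).1
    rw [closure_gapBox p.2] at hz
    obtain ⟨⟨z1, z2⟩, z3, z4⟩ := hz
    have hd0 := gapDepth_nonneg hL p.2.1 p.2.2.1
    have hd1 : 0 < p.1.2 - p.1.1 := sub_pos.2 p.2.2.1
    have hd2 : 0 < p.1.2 - p.1.1 - gapDepth L p := sub_pos.2 p.2.2.2
    rcases eq_or_lt_of_le z3 with e3 | e3
    · have : τ p z = 0 := by simp [τ, ← e3]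
      simp only [B, this]
      rw [hfill.left, hg0, ← e3, collapse_fst hf hL p.2.1 (hd0.trans z1) z2]
    rcases eq_or_lt_of_le z4 with e4 | e4
    · have : τ p z = 1 := by simp [τ, e4, div_self hd1.ne']
      simp only [B, this]
      rw [hfill.right, hg0, e4, collapse_snd hf hL p.2.1 (hd0.trans z1) z2]
    rcases eq_or_lt_of_le z2 with e2 | e2
    · have : ρ p z = 1 := by simp [ρ, e2, div_self hd2.ne']
      simp only [B, this]
      rw [hfill.top, hg0, collapse_top hf hL p.2.1 e2.symm ⟨z3, z4⟩]
    rcases eq_or_lt_of_le z1 with e1 | e1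
    · have : ρ p z = 0 := by simp [ρ, ← e1]
      simp only [B, this]
      have hτ : (τ p z : ℝ) = (z.2 - p.1.1) / (p.1.2 - p.1.1) := by
        simp only [τ]
        rw [projIcc_of_mem zero_le_one ⟨div_nonneg (by linarith) hd1.le,
          (div_le_one hd1).2 (by linarith)⟩]
      rw [hfill.bottom, hg, hτ, div_mul_cancel₀ _ hd1.ne', ← e1]
      congr 1
      ring
    · exact absurd ⟨⟨e1, e2⟩, e3, e4⟩ hzU
  have hfin : ∀ ε > 0, {p : gaps L | ¬ ∀ x ∈ closure (gapBox L p), ∀ y ∈ closure (gapBox L p),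
      dist (F x) (F y) ≤ ε}.Finite := by
    intro ε hε
    obtain ⟨δ, hδ, hKδ⟩ := hKs (ε / 2) (half_pos hε)
    obtain ⟨η, hη, hu⟩ := Metric.uniformContinuousOn_iff.1
      (hA.uniformContinuousOn_of_continuous hcA) δ hδ
    refine (finite_large_gaps hL hη).subset fun p hp => ?_
    by_contra hcon
    refine hp fun x hx y hy => ?_
    have hsm : ∀ t, dist (g p t) (g p 0) < δ := by
      intro t
      have ht := affine_mem_Icc p.2.2.1.le t
      have hd := gapDepth_nonneg hL p.2.1 p.2.2.1
      have hd1 : 0 < p.1.2 - p.1.1 := sub_pos.2 p.2.2.1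
      have hd2 : 0 < p.1.2 - p.1.1 - gapDepth L p := sub_pos.2 p.2.2.2
      rw [hg0, hg]
      rcases not_and_or.1 hcon with hc | hc
      · rw [← collapse_top hf hL p.2.1 rfl ht]
        refine hu _ (bottom_gapBox_mem hL p.2 ht) _ (top_gapBox_mem hL p.2 ht) ?_
        rw [Prod.dist_eq, dist_self, Real.dist_eq, abs_sub_comm, abs_of_pos hd2]
        exact max_lt (not_le.1 hc) hη
      · rw [← collapse_fst hf hL p.2.1 hd p.2.2.2.le]
        refine hu _ (bottom_gapBox_mem hL p.2 ht) _
          (bottom_gapBox_mem hL p.2 ⟨le_rfl, p.2.2.1.le⟩) ?_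
        rw [Prod.dist_eq, dist_self, Real.dist_eq]
        refine max_lt hη (lt_of_le_of_lt ?_ (not_le.1 hc))
        dsimp
        rw [abs_of_nonneg (by linarith [ht.1])]
        linarith [ht.2]
    have h1 := hKδ _ (hgP p) hsm (ρ p x, τ p x)
    have h2 := hKδ _ (hgP p) hsm (ρ p y, τ p y)
    rw [hFB p x hx, hFB p y hy]
    linarith [dist_triangle_right (B p x) (B p y) (g p 0)]
  have hcont : ContinuousOn F (gapFree L ∪ ⋃ p : gaps L, gapBox L p) :=
    continuousOn_union_of_finite_large (U := fun p : gaps L => gapBox L p)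
      (fun x r => (convex_ball x r).isPreconnected) hA.isClosed
      (fun p => isOpen_gapBox L p) (fun p => frontier_gapBox_subset hL p.2)
      (fun p => Set.disjoint_left.2 fun z hz hzA => hzA.2 p p.2.1 hz)
      (hcA.congr hFA) (fun p => (hBc p).continuousOn.congr (hFB p)) hfin
  have hcover : ∀ z ∈ Icc (0 : ℝ) 1 ×ˢ Icc (0 : ℝ) 1,
      z ∈ gapFree L ∪ ⋃ p : gaps L, gapBox L p := by
    intro z hz
    by_cases h : ∃ p ∈ L, z ∈ gapBox L p
    · obtain ⟨p, hp, hzp⟩ := h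
      exact Or.inr (mem_iUnion.2 ⟨⟨p, mem_gaps_of_mem_gapBox hp hzp⟩, hzp⟩)
    · exact Or.inl ⟨hz, fun p hp hzp => h ⟨p, hp, hzp⟩⟩
  have hFV : ∀ z ∈ Icc (0 : ℝ) 1 ×ˢ Icc (0 : ℝ) 1, F z ∈ V := by
    intro z hz
    rcases hcover z hz with h | h
    · rw [hFA z h]
      exact hcV _ _ hz.1.1 hz.2.1 hz.2.2
    · obtain ⟨p, hp⟩ := mem_iUnion.1 h
      rw [hFU p z hp]
      exact (hK _ (hgP p)).2 ⟨_, rfl⟩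
  have hbd : ∀ s t : I, (s = 0 ∨ s = 1 ∨ t = 0 ∨ t = 1) →
      F ((s : ℝ), (t : ℝ)) = collapse f L s t := by
    intro s t h
    refine hFA _ ⟨⟨s.2, t.2⟩, fun p hp hz => ?_⟩
    obtain ⟨⟨a1, a2⟩, a3, a4⟩ := hz
    dsimp at a1 a2 a3 a4
    have := hl.nonneg p hp
    have := hl.le_one p hp
    have := gapDepth_nonneg hL hp (a3.trans a4)
    rcases h with rfl | rfl | rfl | rfl
    · rw [Icc.coe_zero] at a1; linarith
    · rw [Icc.coe_one] at a2; linarith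
    · rw [Icc.coe_zero] at a3; linarith
    · rw [Icc.coe_one] at a4; linarith
  have hf0 : f 0 = γ 0 := by simpa using hfI 0
  refine ⟨⟨fun z => F ((z.1 : ℝ), (z.2 : ℝ)), hcont.comp_continuous (by fun_prop)
    fun z => hcover _ ⟨z.1.2, z.2.2⟩⟩, ⟨fun t => ?_, fun t => ?_, fun s => ?_, fun s => ?_⟩, ?_⟩
  · change F (((0 : I) : ℝ), (t : ℝ)) = _
    rw [hbd 0 t (Or.inl rfl), Icc.coe_zero, collapse_zero hf hL t.2.1 t.2.2, hfI]
  · change F (((1 : I) : ℝ), (t : ℝ)) = _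
    rw [hbd 1 t (Or.inr (Or.inl rfl)), Icc.coe_one,
      collapse_top hf hL h01L (s := 1) (by simp) ⟨t.2.1, t.2.2⟩, hf0]
  · change F ((s : ℝ), ((0 : I) : ℝ)) = _
    rw [hbd s 0 (by simp), Icc.coe_zero, ← hf0]
    exact collapse_fst hf hL h01L s.2.1 (by simpa using s.2.2)
  · change F ((s : ℝ), ((1 : I) : ℝ)) = _
    rw [hbd s 1 (by simp), Icc.coe_one, ← hf0]
    exact collapse_snd hf hL h01L s.2.1 (by simpa using s.2.2)
  · rintro _ ⟨z, rfl⟩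
    exact hFV _ ⟨z.1.2, z.2.2⟩

end Filling

section Sphere
open Filter Topology unitInterval

/-- The unit sphere in three-dimensional Euclidean space. -/
abbrev UnitSphere : Type := sphere (0 : EuclideanSpace ℝ (Fin 3)) 1

namespace UnitSphere

lemma exists_chart (u : UnitSphere) :
    ∃ ψ : EuclideanSpace ℝ (Fin 2) → UnitSphere, IsOpenEmbedding ψ ∧ range ψ = {u}ᶜ := by
  have : Fact (Module.finrank ℝ (EuclideanSpace ℝ (Fin 3)) = 2 + 1) := ⟨by simp⟩
  refine ⟨(stereographic' 2 u).symm, ?_, ?_⟩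
  · exact (stereographic' 2 u).symm.isOpenEmbedding (by simp)
  · rw [← image_univ, ← stereographic'_target (n := 2) u]
    exact (stereographic' 2 u).symm_image_target_eq_source.trans (stereographic'_source (n := 2) u)

lemma one_lt_rank_plane : 1 < Module.rank ℝ (EuclideanSpace ℝ (Fin 2)) := by
  rw [← Module.finrank_eq_rank]
  simp

lemma isConnected_compl_singleton (u : UnitSphere) : IsConnected ({u}ᶜ : Set UnitSphere) := by
  obtain ⟨ψ, hψ, hr⟩ := exists_chart u
  rw [← hr]
  exact isConnected_range hψ.continuous

lemma isConnected_compl_pair {u v : UnitSphere} (huv : u ≠ v) :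
    IsConnected ({u, v}ᶜ : Set UnitSphere) := by
  obtain ⟨ψ, hψ, hr⟩ := exists_chart u
  obtain ⟨w, rfl⟩ : v ∈ range ψ := by rw [hr]; exact huv.symm
  have : ({u, ψ w}ᶜ : Set UnitSphere) = ψ '' {w}ᶜ := by
    rw [image_compl_eq_range_sdiff_image hψ.injective, hr, image_singleton]
    ext x
    simp [not_or]
  rw [this]
  exact (isConnected_compl_singleton_of_one_lt_rank one_lt_rank_plane w).image _
    hψ.continuous.continuousOn

instance : ConnectedSpace UnitSphere :=
  Subtype.connectedSpace (isConnected_sphere (by rw [← Module.finrank_eq_rank]; simp) 0 zero_le_one)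

/-- Any three distinct points of the sphere lie on an arc, in the given order. -/
lemma exists_arc_through {a b u : UnitSphere} (hab : a ≠ b) (hau : a ≠ u) (hbu : b ≠ u) :
    ∃ α : C(I, UnitSphere), Function.Injective α ∧ α 0 = a ∧ α 1 = b ∧ u ∈ range α := by
  obtain ⟨ψ, hψ, hr⟩ := exists_chart u
  obtain ⟨a, rfl⟩ : a ∈ range ψ := by rw [hr]; exact hau
  obtain ⟨b, rfl⟩ : b ∈ range ψ := by rw [hr]; exact hbu
  have hne : a ≠ b := fun h => hab (h ▸ rfl)
  set m := (2⁻¹ : ℝ) • (a + b)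
  set w := (2⁻¹ : ℝ) • (b - a)
  have hw : w ≠ 0 := smul_ne_zero (by norm_num) (sub_ne_zero.2 hne.symm)
  classical
  let β : ℝ → UnitSphere := fun t => if t = 0 then u else ψ (m + t⁻¹ • w)
  have hβ0 : β 0 = u := by simp [β]
  have hβ : ∀ t, t ≠ 0 → β t = ψ (m + t⁻¹ • w) := fun t ht => by simp [β, ht]
  have hβc : Continuous β := by
    rw [continuous_iff_continuousAt]
    intro t
    by_cases ht : t = 0
    · subst ht
      rw [continuousAt_iff_punctured_nhds, hβ0]
      have h1 : Tendsto (fun t : ℝ => m + t⁻¹ • w) (𝓝[≠] 0) (cocompact _) := by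
        rw [← Metric.cobounded_eq_cocompact, ← tendsto_norm_atTop_iff_cobounded]
        have h2 : Tendsto (fun t : ℝ => ‖t⁻¹‖ * ‖w‖ + -‖m‖) (𝓝[≠] 0) atTop :=
          tendsto_atTop_add_const_right _ _ ((tendsto_norm_atTop_iff_cobounded.2
            tendsto_inv₀_nhdsNE_zero).atTop_mul_const (norm_pos_iff.2 hw))
        refine tendsto_atTop_mono (fun t => ?_) h2
        have := norm_sub_le (m + t⁻¹ • w) m
        rw [add_sub_cancel_left, norm_smul] at this
        linarith
      have h3 : Tendsto ψ (cocompact _) (𝓝 u) := by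
        let e := OnePoint.equivOfIsEmbeddingOfRangeEq u ψ hψ.isEmbedding hr
        have h4 : Tendsto e (𝓝 OnePoint.infty) (𝓝 u) := e.continuous.tendsto' _ _ rfl
        have h5 := h4.comp (OnePoint.tendsto_coe_infty (X := EuclideanSpace ℝ (Fin 2)))
        rw [coclosedCompact_eq_cocompact] at h5
        exact h5
      refine (h3.comp h1).congr' ?_
      filter_upwards [self_mem_nhdsWithin] with t ht using (hβ t ht).symm
    · have : ContinuousAt (fun t : ℝ => ψ (m + t⁻¹ • w)) t :=
        hψ.continuous.continuousAt.comp (by fun_prop (disch := exact ht))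
      refine this.congr ?_
      filter_upwards [isOpen_ne.mem_nhds ht] with s hs using (hβ s hs).symm
  have hβu : ∀ t, t ≠ 0 → β t ≠ u := by
    intro t ht h
    have : u ∈ range ψ := ⟨_, (hβ t ht).symm.trans h⟩
    rw [hr] at this
    exact this rfl
  have hinj : Function.Injective β := by
    intro s t hst
    by_cases hs : s = 0
    · by_contra hne
      exact hβu t (fun h => hne (hs.trans h.symm)) (by rw [← hst, hs, hβ0])
    by_cases ht : t = 0
    · exact absurd (by rw [hst, ht, hβ0]) (hβu s hs)
    rw [hβ s hs, hβ t ht] at hst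
    have := smul_left_injective ℝ hw (add_left_cancel (hψ.injective hst))
    exact inv_injective this
  refine ⟨⟨fun t => β (2 * t - 1), by fun_prop⟩, fun s t h => ?_, ?_, ?_, ⟨1 / 2, by
    constructor <;> norm_num⟩, ?_⟩
  · have := hinj h
    exact Subtype.ext (by linarith)
  · change β (2 * ((0 : I) : ℝ) - 1) = ψ a
    rw [hβ _ (by simp)]
    congr 1
    simp only [m, w, Icc.coe_zero]
    module
  · change β (2 * ((1 : I) : ℝ) - 1) = ψ b
    rw [hβ _ (by norm_num)]
    congr 1
    simp only [m, w, Icc.coe_one]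
    norm_num
    module
  · simp [β]

lemma norm_eq_one (x : UnitSphere) : ‖(x : EuclideanSpace ℝ (Fin 3))‖ = 1 := by
  simp

lemma lt_inner_iff (x p : UnitSphere) {r : ℝ} (hr : 0 < r) :
    1 - r ^ 2 / 2 < inner ℝ (x : EuclideanSpace ℝ (Fin 3)) p ↔ dist x p < r := by
  have h := norm_sub_sq_real (x : EuclideanSpace ℝ (Fin 3)) p
  rw [norm_eq_one, norm_eq_one] at h
  have hd : dist x p = ‖(x : EuclideanSpace ℝ (Fin 3)) - p‖ := by
    rw [Subtype.dist_eq, dist_eq_norm]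
  rw [hd, ← sq_lt_sq₀ (norm_nonneg _) hr.le, h]
  constructor <;> intro h' <;> linarith

/-- The point at time `s` on the chord from `x` to `y`. -/
noncomputable def chordPoint (x y : UnitSphere) (s : ℝ) : EuclideanSpace ℝ (Fin 3) :=
  (1 - s) • (x : EuclideanSpace ℝ (Fin 3)) + s • (y : EuclideanSpace ℝ (Fin 3))

lemma norm_chordPoint_le (x y : UnitSphere) (s : I) : ‖chordPoint x y s‖ ≤ 1 := by
  have h1 := s.2.1
  have h2 := s.2.2
  refine (norm_add_le _ _).trans ?_
  rw [norm_smul, norm_smul, norm_eq_one, norm_eq_one, Real.norm_of_nonneg h1,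
    Real.norm_of_nonneg (by linarith)]
  linarith

lemma lt_inner_chordPoint {x y : UnitSphere} {p : EuclideanSpace ℝ (Fin 3)} {c : ℝ}
    (hx : c < inner ℝ (x : EuclideanSpace ℝ (Fin 3)) p)
    (hy : c < inner ℝ (y : EuclideanSpace ℝ (Fin 3)) p) (s : I) :
    c < inner ℝ (chordPoint x y s) p := by
  have h1 := s.2.1
  have h2 := s.2.2
  rw [chordPoint, inner_add_left, real_inner_smul_left, real_inner_smul_left]
  rcases h1.eq_or_lt with h0 | h0
  · rw [← h0]
    linarith
  · nlinarith [mul_pos h0 (sub_pos.2 hy), mul_nonneg (sub_nonneg.2 h2) (sub_pos.2 hx).le]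

/-- Paths in an open hemisphere can be contracted radially along chords. -/
lemma exists_chordContraction {Z : Type*} [TopologicalSpace Z] (γ : C(Z, UnitSphere))
    (y : UnitSphere) (h : ∃ p : UnitSphere, 0 < inner ℝ (y : EuclideanSpace ℝ (Fin 3)) p ∧
      ∀ z, 0 < inner ℝ (γ z : EuclideanSpace ℝ (Fin 3)) p) :
    ∃ H : C(I × Z, UnitSphere), (∀ z, H (0, z) = γ z) ∧ (∀ z, H (1, z) = y) ∧
      (∀ s z, γ z = y → H (s, z) = y) ∧
      ∀ (p : UnitSphere) (c : ℝ), 0 ≤ c → c < inner ℝ (y : EuclideanSpace ℝ (Fin 3)) p →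
        (∀ z, c < inner ℝ (γ z : EuclideanSpace ℝ (Fin 3)) p) →
        ∀ w, c < inner ℝ (H w : EuclideanSpace ℝ (Fin 3)) p := by
  obtain ⟨p₀, hy, hγ⟩ := h
  have hne : ∀ w : I × Z, chordPoint (γ w.2) y w.1 ≠ 0 := by
    intro w h0
    have := lt_inner_chordPoint (hγ w.2) hy w.1
    rw [h0, inner_zero_left] at this
    exact lt_irrefl _ this
  have hc : Continuous fun w : I × Z => chordPoint (γ w.2) y w.1 := by
    unfold chordPoint
    fun_prop
  have hcn : Continuous fun w : I × Z =>
      ‖chordPoint (γ w.2) y w.1‖⁻¹ • chordPoint (γ w.2) y w.1 :=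
    (hc.norm.inv₀ fun w => norm_ne_zero_iff.2 (hne w)).smul hc
  have hmem : ∀ w : I × Z, ‖chordPoint (γ w.2) y w.1‖⁻¹ • chordPoint (γ w.2) y w.1 ∈
      sphere (0 : EuclideanSpace ℝ (Fin 3)) 1 := fun w => by
    simp [norm_smul, inv_mul_cancel₀ (norm_ne_zero_iff.2 (hne w))]
  let H : C(I × Z, UnitSphere) := ⟨fun w => ⟨_, hmem w⟩, hcn.subtype_mk hmem⟩
  have hval : ∀ w x, chordPoint (γ w.2) y w.1 = (x : UnitSphere) → H w = x := by
    intro w x hx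
    refine Subtype.ext ?_
    change ‖chordPoint (γ w.2) y w.1‖⁻¹ • chordPoint (γ w.2) y w.1 = x
    rw [hx, norm_eq_one, inv_one, one_smul]
  refine ⟨H, fun z => hval _ _ (by simp [chordPoint]), fun z => hval _ _ (by simp [chordPoint]),
    fun s z hz => hval _ _ ?_, fun p c hc0 hcy hcγ w => ?_⟩
  · simp only [chordPoint, hz]
    module
  · change c < inner ℝ (‖chordPoint (γ w.2) y w.1‖⁻¹ • chordPoint (γ w.2) y w.1) _
    rw [real_inner_smul_left]
    have h1 := lt_inner_chordPoint (hcγ w.2) hcy w.1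
    have h2 := (one_le_inv₀ (norm_pos_iff.2 (hne w))).2 (norm_chordPoint_le (γ w.2) y w.1)
    nlinarith

/-- Spherical caps contained in a hemisphere are connected. -/
lemma isConnected_ball (p : UnitSphere) {r : ℝ} (hr : 0 < r) (hr1 : r ≤ 1) :
    IsConnected (ball p r) := by
  refine ⟨⟨p, mem_ball_self hr⟩, isPreconnected_of_forall p fun y hy => ?_⟩
  have hc0 : 0 ≤ 1 - r ^ 2 / 2 := by nlinarith
  have hp := (lt_inner_iff p p hr).2 (by simpa using hr)
  have hy' := (lt_inner_iff y p hr).2 hy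
  obtain ⟨H, h0, h1, -, h2⟩ := exists_chordContraction (ContinuousMap.const Unit y) p
    ⟨p, hc0.trans_lt hp, fun _ => hc0.trans_lt hy'⟩
  refine ⟨range fun s : I => H (s, ()), ?_, ⟨1, h1 _⟩, ⟨0, h0 _⟩, isPreconnected_range (by fun_prop)⟩
  rintro _ ⟨s, rfl⟩
  exact (lt_inner_iff _ p hr).1 (h2 p _ hc0 hp (fun _ => hy') (s, ()))

/-- A loop in a cap can be filled within that cap, and as close to the base point as the loop. -/
lemma exists_filling_of_ball {p : UnitSphere} {r : ℝ} (hr : 0 < r) (hr1 : r ≤ 1)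
    (γ : C(I, UnitSphere)) (h01 : γ 0 = γ 1) (hγ : ∀ t, γ t ∈ ball p r) :
    ∃ H, IsFilling γ H ∧ (∀ z, H z ∈ ball p r) ∧
      ∀ δ, 0 < δ → δ ≤ 1 → (∀ t, dist (γ t) (γ 0) < δ) → ∀ z, dist (H z) (γ 0) < δ := by
  have hc0 : ∀ r : ℝ, 0 < r → r ≤ 1 → 0 ≤ 1 - r ^ 2 / 2 := fun r h1 h2 => by nlinarith
  have hγ' := fun t => (lt_inner_iff (γ t) p hr).2 (hγ t)
  obtain ⟨H, h0, h1, h2, h3⟩ := exists_chordContraction γ (γ 0)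
    ⟨p, (hc0 r hr hr1).trans_lt (hγ' 0), fun t => (hc0 r hr hr1).trans_lt (hγ' t)⟩
  refine ⟨H, ⟨h0, h1, fun s => h2 s 0 rfl, fun s => h2 s 1 h01.symm⟩, fun z =>
    (lt_inner_iff _ p hr).1 (h3 p _ (hc0 r hr hr1) (hγ' 0) hγ' z), fun δ hδ hδ1 hs z => ?_⟩
  exact (lt_inner_iff _ _ hδ).1 (h3 (γ 0) _ (hc0 δ hδ hδ1) ((lt_inner_iff _ _ hδ).2 (hs 0))
    (fun t => (lt_inner_iff _ _ hδ).2 (hs t)) z)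

lemma exists_filling_of_notMem (γ : C(I, UnitSphere)) (h01 : γ 0 = γ 1) {u : UnitSphere}
    (hu : u ∉ range γ) : ∃ H, IsFilling γ H := by
  obtain ⟨ψ, hψ, hr⟩ := exists_chart u
  have hmem : ∀ t, γ t ∈ range ψ := fun t => by
    rw [hr]; exact fun h => hu ⟨t, h⟩
  choose g hg using hmem
  have hgc : Continuous g := by
    rw [hψ.isInducing.continuous_iff]
    exact γ.continuous.congr fun t => (hg t).symm
  have hg01 : g 0 = g 1 := hψ.injective (by rw [hg, hg, h01])
  refine ⟨⟨fun z => ψ ((1 - (z.1 : ℝ)) • g z.2 + (z.1 : ℝ) • g 0), hψ.continuous.comp (by fun_prop)⟩,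
    ⟨fun t => ?_, fun t => ?_, fun s => ?_, fun s => ?_⟩⟩
  · simp [hg]
  · simp [hg]
  · change ψ _ = _
    rw [← hg 0]
    congr 1
    module
  · change ψ _ = _
    rw [← hg 0]
    congr 1
    simp only [← hg01]
    module

lemma not_surjective_of_isJordanLoop {γ : C(I, UnitSphere)} (h : IsJordanLoop γ) :
    ¬ Function.Surjective γ := by
  intro hs
  obtain ⟨b, hb⟩ : ∃ b, γ b ≠ γ 0 := by
    obtain ⟨y, hy⟩ := (isConnected_compl_singleton (γ 0)).nonempty
    obtain ⟨b, rfl⟩ := hs y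
    exact ⟨b, hy⟩
  have hconn := (isConnected_compl_pair hb.symm).isPreconnected
  have hcl : ∀ s : Set I, IsClosed s → IsClosed (γ '' s) := fun s hs' =>
    (hs'.isCompact.image γ.continuous).isClosed
  have hmeet : ∀ u v, u ≤ b → b ≤ v → γ u = γ v → γ u ∈ ({γ 0, γ b} : Set UnitSphere) := by
    intro u v hu hv he
    rcases h.imp u v (hu.trans hv) he with ⟨rfl, rfl⟩ | hk
    · exact Or.inl rfl
    · exact Or.inr (hk b ⟨hu, hv⟩).symm
  have hne : ∀ a c : I, a ≤ c → γ a ≠ γ c → ∃ t ∈ Icc a c, γ t ∉ ({γ 0, γ b} : Set UnitSphere) := by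
    intro a c hac hac'
    by_contra! hcon
    have hsub : γ '' Icc a c ⊆ {γ 0, γ b} := by
      rintro _ ⟨t, ht, rfl⟩; exact hcon t ht
    have hpre : IsPreconnected (γ '' Icc a c) := isPreconnected_Icc.image _ γ.continuous.continuousOn
    have := ((toFinite {γ 0, γ b} : Set.Finite _).subset hsub).countable.isTotallyDisconnected
      _ subset_rfl hpre
    exact hac' (this ⟨a, ⟨le_rfl, hac⟩, rfl⟩ ⟨c, ⟨hac, le_rfl⟩, rfl⟩)
  obtain ⟨t1, ht1, ht1'⟩ := hne 0 b b.2.1 hb.symm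
  obtain ⟨t2, ht2, ht2'⟩ := hne b 1 b.2.2 (by rwa [← h.loop])
  obtain ⟨x, hx, ⟨u, hu, rfl⟩, v, hv, he⟩ := isPreconnected_closed_iff.1 hconn (γ '' Icc 0 b)
    (γ '' Icc b 1) (hcl _ isClosed_Icc) (hcl _ isClosed_Icc) (by
      intro x _
      obtain ⟨t, rfl⟩ := hs x
      rcases le_total t b with ht | ht
      · exact Or.inl ⟨t, ⟨t.2.1, ht⟩, rfl⟩
      · exact Or.inr ⟨t, ⟨ht, t.2.2⟩, rfl⟩)
    ⟨γ t1, ht1', t1, ht1, rfl⟩ ⟨γ t2, ht2', t2, ht2, rfl⟩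
  exact hx (hmeet u v hu.2 hv.1 he.symm)

end UnitSphere
end Sphere

section Fillable
open Filter Topology unitInterval

/-- A set in which all Jordan loops can be filled, small ones by small fillings. -/
structure IsFillable {X : Type} [MetricSpace X] (D : Set X) : Prop where
  exists_filling : ∀ γ : C(I, X), IsJordanLoop γ → range γ ⊆ D → ∃ H, IsFilling γ H ∧ range H ⊆ D
  exists_small_filling : ∀ ε > 0, ∃ δ > 0, ∀ γ : C(I, X), IsJordanLoop γ → range γ ⊆ D →
    (∀ t, dist (γ t) (γ 0) < δ) → ∃ H, IsFilling γ H ∧ range H ⊆ D ∧ ∀ z, dist (H z) (γ 0) < ε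

lemma UnitSphere.isFillable_univ : IsFillable (univ : Set UnitSphere) := by
  refine ⟨fun γ hγ _ => ?_, fun ε hε => ⟨min ε 1, by positivity, fun γ hγ _ hs => ?_⟩⟩
  · obtain ⟨u, hu⟩ := not_forall.1 (not_surjective_of_isJordanLoop hγ)
    obtain ⟨H, hH⟩ := exists_filling_of_notMem γ hγ.loop (u := u) hu
    exact ⟨H, hH, subset_univ _⟩
  · obtain ⟨H, hH, hb, -⟩ := exists_filling_of_ball (p := γ 0) (r := min ε 1) (by positivity)
      (min_le_right _ _) γ hγ.loop hs
    exact ⟨H, hH, subset_univ _, fun z => (hb z).trans_le (min_le_left _ _)⟩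

lemma UnitSphere.isFillable_ball (p : UnitSphere) {r : ℝ} (hr : 0 < r) (hr1 : r ≤ 1) :
    IsFillable (ball p r) := by
  refine ⟨fun γ hγ hs => ?_, fun ε hε => ⟨min ε 1, by positivity, fun γ hγ hs hd => ?_⟩⟩
  · obtain ⟨H, hH, hb, -⟩ := exists_filling_of_ball hr hr1 γ hγ.loop fun t => hs ⟨t, rfl⟩
    exact ⟨H, hH, by rintro _ ⟨z, rfl⟩; exact hb z⟩
  · obtain ⟨H, hH, hb, hsm⟩ := exists_filling_of_ball hr hr1 γ hγ.loop fun t => hs ⟨t, rfl⟩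
    exact ⟨H, hH, by rintro _ ⟨z, rfl⟩; exact hb z, fun z =>
      (hsm _ (by positivity) (min_le_right _ _) hd z).trans_le (min_le_left _ _)⟩

lemma IsFillable.image {X Y : Type} [MetricSpace X] [MetricSpace Y] [CompactSpace Y] {φ : Y → X}
    (hφ : IsEmbedding φ) {D : Set Y} (hD : IsFillable D) : IsFillable (φ '' D) := by
  have hlift : ∀ γ : C(I, X), IsJordanLoop γ → range γ ⊆ φ '' D →
      ∃ γ' : C(I, Y), IsJordanLoop γ' ∧ range γ' ⊆ D ∧ ∀ t, φ (γ' t) = γ t := by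
    intro γ hγ hr
    choose g hgD hg using fun t => hr ⟨t, rfl⟩
    have hgc : Continuous g := by
      rw [hφ.continuous_iff]
      exact γ.continuous.congr fun t => (hg t).symm
    refine ⟨⟨g, hgc⟩, ⟨hφ.injective ?_, fun u v huv he => ?_⟩, ?_, hg⟩
    · exact (hg 0).trans (hγ.loop.trans (hg 1).symm)
    · refine (hγ.imp u v huv ?_).imp id fun h w hw => hφ.injective ?_
      · rw [← hg, ← hg]
        exact congrArg φ he
      · exact (hg w).trans ((h w hw).trans (hg u).symm)
    · rintro _ ⟨t, rfl⟩
      exact hgD t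
  have hpush : ∀ (γ : C(I, X)) (γ' : C(I, Y)), (∀ t, φ (γ' t) = γ t) → ∀ H, IsFilling γ' H →
      IsFilling γ ((⟨φ, hφ.continuous⟩ : C(Y, X)).comp H) := by
    intro γ γ' hγ' H hH
    constructor
    · intro t
      exact (congrArg φ (hH.bottom t)).trans (hγ' t)
    · intro t
      exact (congrArg φ (hH.top t)).trans (hγ' 0)
    · intro t
      exact (congrArg φ (hH.left t)).trans (hγ' 0)
    · intro t
      exact (congrArg φ (hH.right t)).trans (hγ' 0)
  refine ⟨fun γ hγ hr => ?_, fun ε hε => ?_⟩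
  · obtain ⟨γ', hJ, hD', hγ'⟩ := hlift γ hγ hr
    obtain ⟨H, hH, hHD⟩ := hD.exists_filling γ' hJ hD'
    refine ⟨_, hpush γ γ' hγ' H hH, ?_⟩
    rintro _ ⟨z, rfl⟩
    exact ⟨H z, hHD ⟨z, rfl⟩, rfl⟩
  · obtain ⟨ε', hε', hu⟩ := Metric.uniformContinuous_iff.1
      (CompactSpace.uniformContinuous_of_continuous hφ.continuous) ε hε
    obtain ⟨δ', hδ', hs⟩ := hD.exists_small_filling ε' hε'
    have : CompactSpace (range φ) := isCompact_iff_compactSpace.1 (isCompact_range hφ.continuous)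
    obtain ⟨δ, hδ, hu''⟩ := Metric.uniformContinuous_iff.1
      (CompactSpace.uniformContinuous_of_continuous hφ.toHomeomorph.symm.continuous) δ' hδ'
    have hu' : ∀ a b, dist (φ a) (φ b) < δ → dist a b < δ' := fun a b hab => by
      simpa using hu'' (a := hφ.toHomeomorph a) (b := hφ.toHomeomorph b) hab
    refine ⟨δ, hδ, fun γ hγ hr hd => ?_⟩
    obtain ⟨γ', hJ, hD', hγ'⟩ := hlift γ hγ hr
    obtain ⟨H, hH, hHD, hHs⟩ := hs γ' hJ hD' fun t => hu' _ _ (by rw [hγ', hγ']; exact hd t)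
    refine ⟨_, hpush γ γ' hγ' H hH, ?_, fun z => ?_⟩
    · rintro _ ⟨z, rfl⟩
      exact ⟨H z, hHD ⟨z, rfl⟩, rfl⟩
    · rw [← hγ']
      exact hu (hHs z)

namespace IsTopological2Sphere
variable {X : Type} [MetricSpace X] {T : Set X}

lemma exists_embedding (hT : IsTopological2Sphere T) :
    ∃ φ : UnitSphere → X, IsEmbedding φ ∧ range φ = T := by
  obtain ⟨e⟩ := hT
  exact ⟨fun x => e.symm x, IsEmbedding.subtypeVal.comp e.symm.isEmbedding, by
    rw [range_comp' Subtype.val, e.symm.surjective.range_eq, image_univ, Subtype.range_coe]⟩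

lemma isCompact (hT : IsTopological2Sphere T) : IsCompact T := by
  obtain ⟨φ, hφ, rfl⟩ := hT.exists_embedding
  exact isCompact_range hφ.continuous

lemma isConnected (hT : IsTopological2Sphere T) : IsConnected T := by
  obtain ⟨φ, hφ, rfl⟩ := hT.exists_embedding
  exact isConnected_range hφ.continuous

lemma exists_arc_through (hT : IsTopological2Sphere T) {a b u : X} (ha : a ∈ T) (hb : b ∈ T)
    (hu : u ∈ T) (hab : a ≠ b) (hau : a ≠ u) (hbu : b ≠ u) :
    ∃ α : C(I, X), Function.Injective α ∧ α 0 = a ∧ α 1 = b ∧ u ∈ range α ∧ range α ⊆ T := by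
  obtain ⟨φ, hφ, rfl⟩ := hT.exists_embedding
  obtain ⟨a, rfl⟩ := ha
  obtain ⟨b, rfl⟩ := hb
  obtain ⟨u, rfl⟩ := hu
  obtain ⟨α, hα, h0, h1, t, ht⟩ := UnitSphere.exists_arc_through (fun h => hab (congrArg φ h))
    (fun h => hau (congrArg φ h)) (fun h => hbu (congrArg φ h))
  refine ⟨(⟨φ, hφ.continuous⟩ : C(UnitSphere, X)).comp α, hφ.injective.comp hα, congrArg φ h0,
    congrArg φ h1, ⟨t, congrArg φ ht⟩, ?_⟩
  rintro _ ⟨s, rfl⟩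
  exact ⟨α s, rfl⟩

lemma isFillable (hT : IsTopological2Sphere T) : IsFillable T := by
  obtain ⟨φ, hφ, rfl⟩ := hT.exists_embedding
  rw [← image_univ]
  exact UnitSphere.isFillable_univ.image hφ

/-- Small discs in a topological sphere. -/
lemma exists_isFillable_subset (hT : IsTopological2Sphere T) {q : X} (hq : q ∈ T) {U : Set X}
    (hU : IsOpen U) (hqU : q ∈ U) :
    ∃ D : Set X, q ∈ D ∧ D ⊆ T ∩ U ∧ (∃ O, IsOpen O ∧ D = T ∩ O) ∧ IsPreconnected D ∧
      IsFillable D := by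
  obtain ⟨φ, hφ, rfl⟩ := hT.exists_embedding
  obtain ⟨q, rfl⟩ := hq
  obtain ⟨r, hr, hrU⟩ := Metric.isOpen_iff.1 (hU.preimage hφ.continuous) q hqU
  have hr' : 0 < min r 1 := by positivity
  have hsub : ball q (min r 1) ⊆ φ ⁻¹' U := (ball_subset_ball (min_le_left _ _)).trans hrU
  obtain ⟨O, hO, hOb⟩ := hφ.isOpen_iff.1 (isOpen_ball (x := q) (ε := min r 1))
  refine ⟨φ '' ball q (min r 1), ⟨q, mem_ball_self hr', rfl⟩, ?_, ⟨O, hO, ?_⟩,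
    (UnitSphere.isConnected_ball q hr' (min_le_right _ _)).isPreconnected.image _
      hφ.continuous.continuousOn, (UnitSphere.isFillable_ball q hr' (min_le_right _ _)).image hφ⟩
  · rintro _ ⟨x, hx, rfl⟩
    exact ⟨⟨x, rfl⟩, hsub hx⟩
  · rw [← hOb, image_preimage_eq_range_inter]

end IsTopological2Sphere
end Fillable

section MaximalCyclic
open Filter Topology unitInterval

lemma IsJordanCurve.exists_maximalCyclic {X : Type} [TopologicalSpace X] {J : Set X}
    (hJ : IsJordanCurve J) : ∃ T, MaximalCyclic T ∧ J ⊆ T := by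
  obtain ⟨T, hJT, hT⟩ := zorn_subset_nonempty {C : Set X | CyclicallyConnected C} (by
    intro c hc hchain _
    refine ⟨⋃₀ c, ?_, fun s hs => subset_sUnion_of_mem hs⟩
    rintro x ⟨s, hs, hx⟩ y ⟨t, ht, hy⟩
    obtain ⟨u, hu, hxu, hyu⟩ : ∃ u ∈ c, x ∈ u ∧ y ∈ u := by
      rcases hchain.total hs ht with h | h
      · exact ⟨t, ht, h hx, hy⟩
      · exact ⟨s, hs, hx, h hy⟩
    obtain ⟨K, hKu, hK⟩ := hc hu x hxu y hyu
    exact ⟨K, hKu.trans (subset_sUnion_of_mem hu), hK⟩) J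
    (fun x hx y hy => ⟨J, Subset.rfl, hJ, hx, hy⟩)
  refine ⟨T, ⟨fun hs => ?_, hT.1, fun C hC hTC => (hT.2 hC hTC).antisymm hTC⟩, hJT⟩
  obtain ⟨e⟩ := hJ
  have : Fact ((0 : ℝ) < 1) := ⟨one_pos⟩
  have hab : ((0 : ℝ) : AddCircle (1 : ℝ)) ≠ ((1 / 2 : ℝ) : AddCircle (1 : ℝ)) := by
    rw [Ne, AddCircle.coe_eq_coe_iff_of_mem_Ico (a := 0) (by norm_num) (by norm_num)]
    norm_num
  exact hab (e.injective (Subtype.ext (hs (hJT (e _).2) (hJT (e _).2))))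

variable {X : Type} [MetricSpace X]

/-- Two arcs that share just their end points form a Jordan curve. -/
lemma isJordanCurve_union {α β : C(I, X)} (hα : Function.Injective α) (hβ : Function.Injective β)
    (h0 : α 0 = β 0) (h1 : α 1 = β 1) (h : ∀ s t, α s = β t → s = 0 ∨ s = 1) :
    IsJordanCurve (range α ∪ range β) := by
  let p : Path (α 0) (α 1) := ⟨α, rfl, rfl⟩
  let q : Path (α 0) (α 1) := ⟨β, h0.symm, h1.symm⟩
  have hr : range (p.trans q.symm).toContinuousMap = range α ∪ range β := by
    have := p.trans_range q.symm
    rw [Path.symm_range] at this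
    exact this
  rw [← hr]
  refine isJordanCurve_range _ ((p.trans q.symm).source.trans (p.trans q.symm).target.symm) ?_
  intro u v huv he
  have huv' : (u : ℝ) < v := huv
  change (p.trans q.symm) u = (p.trans q.symm) v at he
  rw [Path.trans_apply, Path.trans_apply] at he
  split_ifs at he with hu hv hv
  · have := congrArg Subtype.val (hα he)
    simp only at this
    linarith
  · have hs := h _ _ he
    have hv1 := v.2.2
    push Not at hv
    rcases hs with hs | hs
    · have h2 : σ ⟨2 * (v : ℝ) - 1, by linarith, by linarith⟩ = 0 := hβ (by
        rw [← h0, ← hs]; exact he.symm)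
      have h3 := congrArg Subtype.val hs
      have h4 := congrArg Subtype.val h2
      simp at h3 h4
      exact ⟨h3, Subtype.ext (show (v : ℝ) = 1 by linarith)⟩
    · have h2 : σ ⟨2 * (v : ℝ) - 1, by linarith, by linarith⟩ = 1 := hβ (by
        rw [← h1, ← hs]; exact he.symm)
      have h4 := congrArg Subtype.val h2
      simp at h4
      linarith
  · exact absurd (huv'.le.trans hv) hu
  · have := congrArg Subtype.val (unitInterval.symm_inj.1 (hβ he))
    simp only at this
    linarith

lemma MaximalCyclic.nontrivial {T : Set X} (hT : MaximalCyclic T) : T.Nontrivial :=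
  not_subsingleton_iff.1 hT.1

/-- An arc cannot meet a maximal cyclic sphere in just its two end points. -/
lemma MaximalCyclic.false_of_arc {T : Set X} (hT : MaximalCyclic T) (hs : IsTopological2Sphere T)
    {γ : C(I, X)} (hγ : Function.Injective γ) (h0 : γ 0 ∈ T) (h1 : γ 1 ∈ T)
    (h : ∀ t, γ t ∈ T → t = 0 ∨ t = 1) : False := by
  have h01 : γ 0 ≠ γ 1 := fun he => zero_ne_one (hγ he)
  have key : ∀ u ∈ T, u ≠ γ 0 → u ≠ γ 1 →
      ∃ J ⊆ T ∪ range γ, IsJordanCurve J ∧ u ∈ J ∧ range γ ⊆ J := by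
    intro u hu hu0 hu1
    obtain ⟨α, hα, hα0, hα1, huα, hαT⟩ :=
      hs.exists_arc_through h0 h1 hu h01 hu0.symm hu1.symm
    refine ⟨range γ ∪ range α, union_subset subset_union_right (hαT.trans subset_union_left),
      isJordanCurve_union hγ hα hα0.symm hα1.symm fun s t he => h s ?_, Or.inr huα,
      subset_union_left⟩
    rw [he]
    exact hαT ⟨t, rfl⟩
  obtain ⟨u₀, hu₀, hu₀'⟩ := (hs.isConnected.isPreconnected.infinite_of_nontrivial
    hT.nontrivial).exists_notMem_finite (toFinite {γ 0, γ 1})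
  have hmain : ∀ x ∈ T ∪ range γ, ∀ y ∈ range γ,
      ∃ J ⊆ T ∪ range γ, IsJordanCurve J ∧ x ∈ J ∧ y ∈ J := by
    intro x hx y hy
    by_cases hxγ : x ∈ range γ
    · obtain ⟨J, hJ, hJc, -, hγJ⟩ := key u₀ hu₀ (fun he => hu₀' (Or.inl he))
        (fun he => hu₀' (Or.inr he))
      exact ⟨J, hJ, hJc, hγJ hxγ, hγJ hy⟩
    · obtain ⟨J, hJ, hJc, hxJ, hγJ⟩ := key x (hx.resolve_right hxγ)
        (fun he => hxγ ⟨0, he.symm⟩) (fun he => hxγ ⟨1, he.symm⟩)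
      exact ⟨J, hJ, hJc, hxJ, hγJ hy⟩
  have hC : CyclicallyConnected (T ∪ range γ) := by
    intro x hx y hy
    by_cases hyγ : y ∈ range γ
    · exact hmain x hx y hyγ
    by_cases hxγ : x ∈ range γ
    · obtain ⟨J, hJ, hJc, hyJ, hxJ⟩ := hmain y hy x hxγ
      exact ⟨J, hJ, hJc, hxJ, hyJ⟩
    obtain ⟨J, hJ, hJ'⟩ := hT.2.1 x (hx.resolve_right hxγ) y (hy.resolve_right hyγ)
    exact ⟨J, hJ.trans subset_union_left, hJ'⟩
  have hCT := hT.2.2 _ hC subset_union_left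
  have hmid : γ ⟨1 / 2, by norm_num, by norm_num⟩ ∈ T := by
    rw [← hCT]
    exact Or.inr ⟨_, rfl⟩
  rcases h _ hmid with he | he <;> have := congrArg Subtype.val he <;> norm_num at this

/-- An arc with its end points in a maximal cyclic sphere remains in the sphere. -/
lemma MaximalCyclic.range_subset {T : Set X} (hT : MaximalCyclic T) (hs : IsTopological2Sphere T)
    {γ : C(I, X)} (hγ : Function.Injective γ) (h0 : γ 0 ∈ T) (h1 : γ 1 ∈ T) : range γ ⊆ T := by
  rintro _ ⟨t, rfl⟩
  by_contra ht
  have hK : IsClosed (γ ⁻¹' T) := hs.isCompact.isClosed.preimage γ.continuous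
  obtain ⟨a, ⟨haT, hat⟩, ha⟩ := (hK.inter isClosed_Iic).isCompact.exists_isGreatest
    ⟨0, h0, (t.2.1 : (0 : I) ≤ t)⟩
  obtain ⟨b, ⟨hbT, htb⟩, hb⟩ := (hK.inter isClosed_Ici).isCompact.exists_isLeast
    ⟨1, h1, (t.2.2 : t ≤ (1 : I))⟩
  have hat' : (a : ℝ) < t := lt_of_le_of_ne hat fun he => ht (Subtype.ext he ▸ haT)
  have htb' : (t : ℝ) < b := lt_of_le_of_ne htb fun he => ht (Subtype.ext he ▸ hbT)
  have ha0 := a.2.1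
  have hb1 := b.2.2
  let τ : C(I, I) := ⟨fun s => ⟨a + s * (b - a), by
    have := s.2.1; have := s.2.2; constructor <;> nlinarith⟩, by fun_prop⟩
  have hτ : ∀ s, (τ s : ℝ) = a + s * (b - a) := fun s => rfl
  refine hT.false_of_arc hs (γ := γ.comp τ) (hγ.comp fun s s' he => ?_) ?_ ?_ fun s hsT => ?_
  · have := congrArg Subtype.val he
    rw [hτ, hτ] at this
    exact Subtype.ext (mul_right_cancel₀ (sub_pos.2 (hat'.trans htb')).ne' (add_left_cancel this))
  · have : τ 0 = a := Subtype.ext (by simp [hτ])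
    simpa [this] using haT
  · have : τ 1 = b := Subtype.ext (by simp [hτ])
    simpa [this] using hbT
  · rcases le_total (τ s) t with hle | hle
    · left
      have h2 : (τ s : ℝ) ≤ a := ha ⟨hsT, hle⟩
      rw [hτ] at h2
      have h3 := s.2.1
      exact Subtype.ext (show (s : ℝ) = 0 by nlinarith)
    · right
      have h2 : (b : ℝ) ≤ τ s := hb ⟨hsT, hle⟩
      rw [hτ] at h2
      have h3 := s.2.2
      exact Subtype.ext (show (s : ℝ) = 1 by nlinarith)

lemma MaximalCyclic.eq_of_mem {T T' : Set X} (hT : MaximalCyclic T) (hs : IsTopological2Sphere T)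
    (hT' : MaximalCyclic T') (hs' : IsTopological2Sphere T') (hne : T ≠ T') {a b : X}
    (ha : a ∈ T) (ha' : a ∈ T') (hb : b ∈ T) (hb' : b ∈ T') : a = b := by
  by_contra hab
  refine hne (hT'.2.2 T hT.2.1 fun u hu => ?_)
  by_cases hau : a = u
  · exact hau ▸ ha
  by_cases hbu : b = u
  · exact hbu ▸ hb
  obtain ⟨α, hα, h0, h1, huα, -⟩ := hs'.exists_arc_through ha' hb' hu hab hau hbu
  exact hT.range_subset hs hα (h0 ▸ ha) (h1 ▸ hb) huα

/-- `p` is the point through which connected sets containing `x` enter `T`. -/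
structure IsRoot (T : Set X) (x p : X) : Prop where
  mem : p ∈ T
  mem_of_isPreconnected : ∀ S, IsPreconnected S → x ∈ S → (S ∩ T).Nonempty → p ∈ S
  exists_isPreconnected : x ∈ T ∨
    ∃ C, IsPreconnected C ∧ x ∈ C ∧ Disjoint C T ∧ IsPreconnected (insert p C)

lemma MaximalCyclic.exists_isRoot [CompactSpace X] [ConnectedSpace X] [LocallyConnectedSpace X]
    {T : Set X} (hT : MaximalCyclic T) (hs : IsTopological2Sphere T) (x : X) :
    ∃ p, IsRoot T x p := by
  have := locallyPathConnectedSpace_of_compact X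
  by_cases hx : x ∈ T
  · exact ⟨x, hx, fun S _ hxS _ => hxS, Or.inl hx⟩
  have hTo : IsOpen Tᶜ := hs.isCompact.isClosed.isOpen_compl
  set C := connectedComponentIn Tᶜ x with hC
  have hCo : IsOpen C := hTo.connectedComponentIn
  have hCp : IsPreconnected C := isPreconnected_connectedComponentIn
  have hxC : x ∈ C := mem_connectedComponentIn hx
  have hCT : C ⊆ Tᶜ := connectedComponentIn_subset _ _
  have hfr : frontier C ⊆ closure C ∩ T := by
    intro y hy
    rw [hCo.frontier_eq] at hy
    refine ⟨hy.1, by_contra fun hyT => hy.2 ?_⟩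
    refine (hCp.subset_closure (subset_insert y C) (insert_subset hy.1
      subset_closure)).subset_connectedComponentIn (Or.inr hxC) ?_ (Or.inl rfl)
    exact insert_subset hyT hCT
  have huniq : ∀ a ∈ closure C ∩ T, ∀ b ∈ closure C ∩ T, a = b := by
    rintro a ⟨haC, haT⟩ b ⟨hbC, hbT⟩
    by_contra hab
    obtain ⟨U, V, hU, hV, haU, hbV, hUV⟩ := t2_separation hab
    let U' := connectedComponentIn U a
    let V' := connectedComponentIn V b
    have haU' : a ∈ U' := mem_connectedComponentIn haU
    have hbV' : b ∈ V' := mem_connectedComponentIn hbV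
    have hU'o : IsOpen U' := hU.connectedComponentIn
    have hV'o : IsOpen V' := hV.connectedComponentIn
    have hW : IsPreconnected (U' ∪ C ∪ V') := by
      refine IsPreconnected.union' ?_ (IsPreconnected.union' ?_ isPreconnected_connectedComponentIn
        hCp) isPreconnected_connectedComponentIn
      · obtain ⟨z, hz⟩ := mem_closure_iff.1 hbC V' hV'o hbV'
        exact ⟨z, Or.inr hz.2, hz.1⟩
      · exact mem_closure_iff.1 haC U' hU'o haU'
    have hpath := ((hU'o.union hCo).union hV'o).isConnected_iff_isPathConnected.1
      ⟨⟨a, Or.inl (Or.inl haU')⟩, hW⟩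
    have hj := hpath.joinedIn a (Or.inl (Or.inl haU')) b (Or.inr hbV')
    obtain ⟨γ, hγ, h0, h1, hr⟩ := exists_arc hj.somePath.toContinuousMap (by simpa using hab)
    have h0' : γ 0 = a := h0.trans hj.somePath.source
    have h1' : γ 1 = b := h1.trans hj.somePath.target
    have hγT := hT.range_subset hs hγ (h0' ▸ haT) (h1' ▸ hbT)
    have hsub : range γ ⊆ U ∪ V := by
      intro z hz
      obtain ⟨t, rfl⟩ := hr hz
      rcases hj.somePath_mem t with (h | h) | h
      · exact Or.inl (connectedComponentIn_subset _ _ h)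
      · exact absurd (hγT hz) (hCT h)
      · exact Or.inr (connectedComponentIn_subset _ _ h)
    obtain ⟨z, -, hz⟩ := isPreconnected_range γ.continuous U V hU hV hsub
      ⟨a, ⟨0, h0'⟩, haU⟩ ⟨b, ⟨1, h1'⟩, hbV⟩
    exact hUV.le_bot hz
  have hmeet : ∀ S, IsPreconnected S → x ∈ S → (S ∩ T).Nonempty → (S ∩ frontier C).Nonempty :=
    fun S hS hxS hST => hS.inter_frontier_of_isOpen hCo ⟨x, hxS, hxC⟩
      (hST.mono (inter_subset_inter_right _ fun y hy hyC => hCT hyC hy))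
  obtain ⟨p, -, hp⟩ := hmeet univ isPreconnected_univ (mem_univ _) (by
    rw [univ_inter]; exact hT.nontrivial.nonempty)
  refine ⟨p, (hfr hp).2, fun S hS hxS hST => ?_, Or.inr ⟨C, hCp, hxC, disjoint_left.2 hCT, ?_⟩⟩
  · obtain ⟨q, hqS, hq⟩ := hmeet S hS hxS hST
    exact huniq q (hfr hq) p (hfr hp) ▸ hqS
  · exact hCp.subset_closure (subset_insert _ _) (insert_subset (hfr hp).1 subset_closure)

lemma IsRoot.eq_of_mem {T : Set X} {x p : X} (hp : IsRoot T x p) (hx : x ∈ T) : p = x :=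
  hp.mem_of_isPreconnected {x} isPreconnected_singleton rfl ⟨x, rfl, hx⟩

/-- A common point of two maximal cyclic spheres is the root of one of them. -/
lemma IsRoot.eq_of_mem_inter {T T' : Set X} (hT : MaximalCyclic T) (hs : IsTopological2Sphere T)
    (hT' : MaximalCyclic T') (hs' : IsTopological2Sphere T') (hne : T ≠ T') {x p p' q : X}
    (hp : IsRoot T x p) (hp' : IsRoot T' x p') (hq : q ∈ T) (hq' : q ∈ T') (hqp : q ≠ p) :
    q = p' := by
  by_contra hqp'
  have huniq : ∀ y ∈ T, y ∈ T' → q = y := fun y hy hy' => hT.eq_of_mem hs hT' hs' hne hq hq' hy hy'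
  have hp'T : p' ∉ T := fun h => hqp' (huniq _ h hp'.mem)
  have hTc := hs.isConnected.isPreconnected
  have hT'c := hs'.isConnected.isPreconnected
  rcases hp.exists_isPreconnected with hx | ⟨C, hC, hxC, hCT, hCp⟩
  · exact hp'T (hp'.mem_of_isPreconnected T hTc hx ⟨q, hq, hq'⟩)
  · have h1 : p' ∈ insert p C ∪ T := hp'.mem_of_isPreconnected _
      (hCp.union p (Or.inl rfl) hp.mem hTc) (Or.inl (Or.inr hxC)) ⟨q, Or.inr hq, hq'⟩
    have h2 : p' ∈ C := by
      rcases h1 with (h | h) | h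
      · exact absurd (h ▸ hp.mem) hp'T
      · exact h
      · exact absurd h hp'T
    rcases hp.mem_of_isPreconnected (C ∪ T') (hC.union p' h2 hp'.mem hT'c) (Or.inl hxC)
      ⟨q, Or.inr hq', hq⟩ with h | h
    · exact hCT.le_bot ⟨h, hp.mem⟩
    · exact hqp (huniq p hp.mem h)

variable [CompactSpace X] [ConnectedSpace X] [LocallyConnectedSpace X]

/-- All connected sets joining two maximal cyclic spheres have a point in common. -/
lemma MaximalCyclic.exists_forall_mem {T T' : Set X} (hT : MaximalCyclic T)
    (hs : IsTopological2Sphere T) (hT' : MaximalCyclic T') (hs' : IsTopological2Sphere T')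
    (hne : T ≠ T') :
    ∃ p, ∀ S, IsPreconnected S → (S ∩ T).Nonempty → (S ∩ T').Nonempty → p ∈ S := by
  obtain ⟨a₀, ha₀⟩ := hT.nontrivial.nonempty
  have hTc := hs.isConnected.isPreconnected
  obtain ⟨p, hp⟩ := hT'.exists_isRoot hs' a₀
  refine ⟨p, fun S hS ⟨a, haS, haT⟩ hST' => ?_⟩
  rcases hp.mem_of_isPreconnected (S ∪ T) (hS.union a haS haT hTc) (Or.inr ha₀)
    (hST'.mono (inter_subset_inter_left _ subset_union_left)) with h | h
  · exact h
  · obtain ⟨q, hq⟩ := hT'.exists_isRoot hs' a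
    have hqT : q ∈ T := hq.mem_of_isPreconnected T hTc haT ⟨p, h, hp.mem⟩
    have hqp : q = p := hT.eq_of_mem hs hT' hs' hne hqT hq.mem h hp.mem
    exact hqp ▸ hq.mem_of_isPreconnected S hS haS hST'

/-- The maximal cyclic spheres form a null family. -/
lemma finite_maximalCyclic (hc : ∀ T : Set X, MaximalCyclic T → IsTopological2Sphere T) {ε : ℝ}
    (hε : 0 < ε) : {T : Set X | MaximalCyclic T ∧ ∃ a ∈ T, ∃ b ∈ T, ε ≤ dist a b}.Finite := by
  obtain ⟨δ, hδ, hδS⟩ := exists_isPreconnected_of_dist_lt (X := X) (half_pos hε)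
  obtain ⟨t, -, htf, ht⟩ := finite_cover_balls_of_compact (isCompact_univ (X := X × X)) (half_pos hδ)
  by_contra hinf
  choose! a ha b hb hab using fun (T : Set X) (h : ∃ a ∈ T, ∃ b ∈ T, ε ≤ dist a b) => h
  have hcover : ∀ z : X × X, ∃ c ∈ t, dist z c < δ / 2 := fun z => by
    simpa only [mem_iUnion, exists_prop, mem_ball] using ht (mem_univ z)
  choose f hft hf using hcover
  obtain ⟨T, ⟨hT, hTd⟩, T', ⟨hT', hTd'⟩, hne, he⟩ := Set.Infinite.exists_ne_map_eq_of_mapsTo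
    (f := fun T => f (a T, b T)) (t := t) hinf (fun T _ => hft _) htf
  have hd : dist (a T, b T) (a T', b T') < δ := by
    have h1 := hf (a T, b T)
    have h2 := hf (a T', b T')
    rw [← he] at h2
    linarith [dist_triangle_right (a T, b T) (a T', b T') (f (a T, b T))]
  rw [Prod.dist_eq, max_lt_iff] at hd
  obtain ⟨S₁, hS₁, h11, h12, h13⟩ := hδS _ _ hd.1
  obtain ⟨S₂, hS₂, h21, h22, h23⟩ := hδS _ _ hd.2
  obtain ⟨p, hp⟩ := hT.exists_forall_mem (hc T hT) hT' (hc T' hT') hne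
  have h1 := h13 (hp S₁ hS₁ ⟨_, h11, ha T hTd⟩ ⟨_, h12, ha T' hTd'⟩)
  have h2 := h23 (hp S₂ hS₂ ⟨_, h21, hb T hTd⟩ ⟨_, h22, hb T' hTd'⟩)
  rw [mem_ball] at h1 h2
  linarith [hab T hTd, dist_triangle_left (a T) (b T) p]

end MaximalCyclic

section Cactoid
open Filter Topology unitInterval

lemma isFillable_empty {X : Type} [MetricSpace X] : IsFillable (∅ : Set X) :=
  ⟨fun _ _ h => (h ⟨0, rfl⟩).elim, fun _ _ => ⟨1, one_pos, fun _ _ h => (h ⟨0, rfl⟩).elim⟩⟩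

lemma IsFillable.isSimplyConnected {X : Type} [MetricSpace X] {V : Set X} (hV : IsFillable V)
    (hp : IsPathConnected V) : IsSimplyConnected V := by
  refine isSimplyConnected_iff_exists_homotopy_refl_forall_mem.2 ⟨hp, fun x p hpV => ?_⟩
  obtain ⟨H, hH, hHV⟩ :=
    _root_.exists_filling hV.exists_filling hV.exists_small_filling p.toContinuousMap
    (p.source.trans p.target.symm) (by rintro _ ⟨t, rfl⟩; exact hpV t)
  have h0 : p.toContinuousMap 0 = x := p.source
  have h1 : p.toContinuousMap 1 = x := p.target
  refine ⟨⟨⟨H, hH.bottom, fun t => (hH.top t).trans h0⟩, ?_⟩, fun z => hHV ⟨z, rfl⟩⟩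
  rintro s t (rfl | rfl)
  · exact hH.left s
  · exact (hH.right s).trans (h0.trans h1.symm)

variable {X : Type} [MetricSpace X]

/-- If a set meets each maximal cyclic set in a fillable set, then it is fillable, provided
the maximal cyclic sets form a null family. -/
lemma isFillable_of_maximalCyclic {V : Set X}
    (hnull : ∀ ε > 0, {T : Set X | MaximalCyclic T ∧ ∃ a ∈ T, ∃ b ∈ T, ε ≤ dist a b}.Finite)
    (hV : ∀ T, MaximalCyclic T → IsFillable (V ∩ T)) : IsFillable V := by
  have hcases : ∀ γ : C(I, X), IsJordanLoop γ → range γ ⊆ V → (∀ t, γ t = γ 0) ∨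
      ∃ T, MaximalCyclic T ∧ range γ ⊆ V ∩ T := by
    intro γ hγ hr
    by_cases h : ∀ t, γ t = γ 0
    · exact Or.inl h
    · obtain ⟨T, hT, hrT⟩ := (hγ.isJordanCurve_range (not_forall.1 h)).exists_maximalCyclic
      exact Or.inr ⟨T, hT, subset_inter hr hrT⟩
  have hconst : ∀ γ : C(I, X), (∀ t, γ t = γ 0) → IsFilling γ (ContinuousMap.const (I × I) (γ 0)) :=
    fun γ h => ⟨fun t => (h t).symm, fun _ => rfl, fun _ => rfl, fun _ => rfl⟩
  refine ⟨fun γ hγ hr => ?_, fun ε hε => ?_⟩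
  · rcases hcases γ hγ hr with h | ⟨T, hT, hrT⟩
    · exact ⟨_, hconst γ h, by rintro _ ⟨z, rfl⟩; exact hr ⟨0, rfl⟩⟩
    · obtain ⟨H, hH, hHV⟩ := (hV T hT).exists_filling γ hγ hrT
      exact ⟨H, hH, hHV.trans inter_subset_left⟩
  · choose! d hd hfill using fun T hT => (hV T hT).exists_small_filling ε hε
    obtain ⟨δ, hδ, hδ0⟩ := (((eventually_all_finite (hnull ε hε)).2 fun T hT =>
      Ioo_mem_nhdsGT (hd T hT.1)).and self_mem_nhdsWithin).exists
    refine ⟨δ, hδ0, fun γ hγ hr hs => ?_⟩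
    rcases hcases γ hγ hr with h | ⟨T, hT, hrT⟩
    · exact ⟨_, hconst γ h, by rintro _ ⟨z, rfl⟩; exact hr ⟨0, rfl⟩, fun z => by simpa using hε⟩
    by_cases hbig : ∃ a ∈ T, ∃ b ∈ T, ε ≤ dist a b
    · obtain ⟨H, hH, hHV, hHs⟩ := hfill T hT γ hγ hrT fun t => (hs t).trans (hδ T ⟨hT, hbig⟩).2
      exact ⟨H, hH, hHV.trans inter_subset_left, hHs⟩
    · push Not at hbig
      obtain ⟨H, hH, hHV⟩ := (hV T hT).exists_filling γ hγ hrT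
      exact ⟨H, hH, hHV.trans inter_subset_left, fun z =>
        hbig _ (hHV ⟨z, rfl⟩).2 _ (hrT ⟨0, rfl⟩).2⟩

variable [CompactSpace X] [ConnectedSpace X] [LocallyConnectedSpace X]

/-- Every ball of a cactoid contains a simply connected neighborhood of its center, obtained by
cutting out all but a small disc of each maximal cyclic set that leaves the ball. -/
lemma exists_isSimplyConnected_subset_ball
    (hc : ∀ T : Set X, MaximalCyclic T → IsTopological2Sphere T) (x : X) {r : ℝ} (hr : 0 < r) :
    ∃ V, IsOpen V ∧ x ∈ V ∧ V ⊆ ball x r ∧ IsSimplyConnected V := by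
  have := locallyPathConnectedSpace_of_compact X
  choose! p hp using fun T hT => MaximalCyclic.exists_isRoot hT (hc T hT) x
  have hE : ∀ T, MaximalCyclic T → ∃ E ⊆ T, E ⊆ ball x r ∧ IsFillable E ∧ IsPreconnected E ∧
      (∃ O, IsOpen O ∧ E = T ∩ O) ∧ (p T ∈ ball x r → p T ∈ E) ∧ (T ⊆ ball x r → E = T) := by
    intro T hT
    by_cases hTB : T ⊆ ball x r
    · exact ⟨T, Subset.rfl, hTB, (hc T hT).isFillable, (hc T hT).isConnected.isPreconnected,
        ⟨univ, isOpen_univ, (inter_univ T).symm⟩, fun _ => (hp T hT).mem, fun _ => rfl⟩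
    by_cases hpB : p T ∈ ball x r
    · obtain ⟨D, hpD, hD, hDO, hDc, hDf⟩ :=
        (hc T hT).exists_isFillable_subset (hp T hT).mem isOpen_ball hpB
      exact ⟨D, hD.trans inter_subset_left, hD.trans inter_subset_right, hDf, hDc, hDO,
        fun _ => hpD, fun h => absurd h hTB⟩
    · exact ⟨∅, empty_subset _, empty_subset _, isFillable_empty, isPreconnected_empty,
        ⟨∅, isOpen_empty, (inter_empty T).symm⟩, fun h => absurd h hpB, fun h => absurd h hTB⟩
  choose! E hET hEB hEf hEc hEO hpE hEeq using hE
  set G := {y ∈ ball x r | ∀ T, MaximalCyclic T → y ∈ T → y ∈ E T} with hG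
  have hGo : IsOpen G := by
    refine isOpen_iff_mem_nhds.2 fun y hy => ?_
    obtain ⟨ρ, hρ, hρB⟩ := Metric.isOpen_iff.1 isOpen_ball y hy.1
    have hlarge := (eventually_all_finite (finite_maximalCyclic hc (half_pos hρ))).2
      fun T hT => show ∀ᶠ z in 𝓝 y, z ∈ T → z ∈ E T by
        obtain ⟨O, hO, hEO⟩ := hEO T hT.1
        by_cases hyT : y ∈ T
        · have hyO : y ∈ O := (hEO ▸ hy.2 T hT.1 hyT : y ∈ T ∩ O).2
          filter_upwards [hO.mem_nhds hyO] with z hz hzT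
          rw [hEO]
          exact ⟨hzT, hz⟩
        · filter_upwards [(hc T hT.1).isCompact.isClosed.isOpen_compl.mem_nhds hyT] with z hz hzT
          exact absurd hzT hz
    filter_upwards [hlarge, ball_mem_nhds y (half_pos hρ)] with z hz hzy
    refine ⟨hρB (ball_subset_ball (by linarith) hzy), fun T hT hzT => ?_⟩
    by_cases hbig : ∃ a ∈ T, ∃ b ∈ T, ρ / 2 ≤ dist a b
    · exact hz T ⟨hT, hbig⟩ hzT
    · push Not at hbig
      rw [hEeq T hT fun w hw => hρB ?_]
      · exact hzT
      · rw [mem_ball] at hzy ⊢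
        linarith [hbig w hw z hzT, dist_triangle w z y]
  have hxG : x ∈ G := by
    refine ⟨mem_ball_self hr, fun T hT hxT => ?_⟩
    have h := hpE T hT
    rw [(hp T hT).eq_of_mem hxT] at h
    exact h (mem_ball_self hr)
  set V := connectedComponentIn G x with hV
  have hVG : V ⊆ G := connectedComponentIn_subset _ _
  have hxV : x ∈ V := mem_connectedComponentIn hxG
  have hVo : IsOpen V := hGo.connectedComponentIn
  have hVc : IsPreconnected V := isPreconnected_connectedComponentIn
  refine ⟨V, hVo, hxV, fun y hy => (hVG hy).1, IsFillable.isSimplyConnected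
    (isFillable_of_maximalCyclic (fun ε hε => finite_maximalCyclic hc hε) fun T hT => ?_)
    (hVo.isConnected_iff_isPathConnected.1 ⟨⟨x, hxV⟩, hVc⟩)⟩
  by_cases hne : (V ∩ T).Nonempty
  · suffices h : V ∩ T = E T from h ▸ hEf T hT
    refine Subset.antisymm (fun y hy => (hVG hy.1).2 T hT hy.2) (subset_inter ?_ (hET T hT))
    have hpV : p T ∈ V := (hp T hT).mem_of_isPreconnected V hVc hxV hne
    have hpET : p T ∈ E T := hpE T hT (hVG hpV).1
    rw [hV, connectedComponentIn_eq hpV]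
    refine (hEc T hT).subset_connectedComponentIn hpET fun y hy => ⟨hEB T hT hy, ?_⟩
    intro T' hT' hyT'
    by_cases hTT' : T = T'
    · exact hTT' ▸ hy
    by_cases hyp : y = p T
    · exact (hVG (hyp ▸ hpV)).2 T' hT' hyT'
    · have := IsRoot.eq_of_mem_inter hT (hc T hT) hT' (hc T' hT') hTT' (hp T hT) (hp T' hT')
        (hET T hT hy) hyT' hyp
      exact this ▸ hpE T' hT' (this ▸ hEB T hT hy)
  · rw [not_nonempty_iff_eq_empty.1 hne]
    exact isFillable_empty

lemma simplyConnectedSpace_of_maximalCyclic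
    (hc : ∀ T : Set X, MaximalCyclic T → IsTopological2Sphere T) : SimplyConnectedSpace X := by
  have := locallyPathConnectedSpace_of_compact X
  have h : IsSimplyConnected (univ : Set X) := IsFillable.isSimplyConnected
    (isFillable_of_maximalCyclic (fun ε hε => finite_maximalCyclic hc hε) fun T hT => by
      rw [univ_inter]; exact (hc T hT).isFillable)
    (isOpen_univ.isConnected_iff_isPathConnected.1 isConnected_univ)
  have : SimplyConnectedSpace (univ : Set X) := h
  exact (Homeomorph.Set.univ X).symm.toHomotopyEquiv.simplyConnectedSpace

end Cactoid

/-- Every cactoid (a Peano space all of whose maximal cyclic subsets are 2-spheres)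
is simply connected and locally simply connected. -/
theorem cactoid_simplyConnected_locSimplyConnected
    (X : Type) [MetricSpace X] [CompactSpace X] [ConnectedSpace X] [LocallyConnectedSpace X]
    (hc : ∀ T : Set X, MaximalCyclic T → IsTopological2Sphere ↥T) :
    SimplyConnectedSpace X ∧ LocSimplyConnected X := by
  refine ⟨simplyConnectedSpace_of_maximalCyclic hc, fun x U hU => ?_⟩
  obtain ⟨r, hr, hrU⟩ := Metric.mem_nhds_iff.1 hU
  obtain ⟨V, hVo, hxV, hVr, hV⟩ := exists_isSimplyConnected_subset_ball hc x hr
  exact ⟨V, hVo.mem_nhds hxV, hVr.trans hrU, hVo, hV⟩
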